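/- arXiv:1907.12403 — 2 statements merged into one kernel-verified Lean document; each statement's English description precedes it below -/
import Mathlib

section
/- The noiseless closed-loop Markov jump linear system with one time-step delayed mode observations is mean square stable — i.e. for every initial condition (x_0, θ_0, θ_{−1}), lim_{k→∞} E[x_k] = 0 and lim_{k→∞} E[x_k x_k^*] = 0 — if and only if ρ(Λ) < 1. -/
/-! The spectral radius of `Λ` is below one exactly when the powers `Λ ^ k` tend to zero entrywise
(`specRadK_lt_one_iff`), so the theorem compares mean square stability with `Λ ^ k → 0`.

For two trajectories `x`, `y` driven by the same modes, put
`G_k(ℓ, i) = E[x_k y_k^* 1_{θ_k = i, θ_{k-1} = ℓ}]` (`crossMom`). The state at time `k` is a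
function of the past `pastSig θ ν k`, given which and `θ_k` the pair `(θ_{k+1}, ν_k)` has a known
law; hence `G_{k+1} = L(G_k)` and `vec² G_k = Λ ^ k vec² G_0` (`crossMom_succ`, `vec2_crossMom`).

If `Λ ^ k → 0`, then the case `x = y`, summed over `(ℓ, i)`, gives `E[x_k x_k^*] → 0`, and
`‖E x_k‖² ≤ E‖x_k‖²` handles the means.

Conversely, each column of `Λ ^ k` is `vec² G_k` for a process with deterministic
`(θ_{-1}, θ_0)` (`exists_modeProcess`) and trajectories started at two basis vectors, and
`2‖x y‖ ≤ ‖x‖² + ‖y‖²` bounds its entries by second moments that tend to zero. Working with two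
different trajectories reaches all matrix units at once, also over `ℝ`, where the matrices
`v v^*` span only the symmetric ones.
-/

open MeasureTheory Matrix ProbabilityTheory Filter
open scoped BigOperators ComplexOrder

noncomputable section

/-- The canonical ring homomorphism from an `RCLike` field (`ℝ` or `ℂ`) to `ℂ`. -/
def rcToComplex (𝕜 : Type*) [RCLike 𝕜] : 𝕜 →+* ℂ where
  toFun z := ⟨RCLike.re z, RCLike.im z⟩
  map_one' := by simp [Complex.ext_iff]
  map_mul' z w := by simp [Complex.ext_iff, RCLike.mul_re, RCLike.mul_im]
  map_zero' := by simp [Complex.ext_iff]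
  map_add' z w := by simp [Complex.ext_iff]

/-- Spectral radius of a complex square matrix: the largest absolute value of its
(complex) eigenvalues. -/
def specRad {n : Type*} [Fintype n] [DecidableEq n] (M : Matrix n n ℂ) : ℝ :=
  sSup ((fun z => ‖z‖) '' spectrum ℂ M)

/-- Spectral radius of a square matrix over `ℝ` or `ℂ`, computed over `ℂ`. -/
def specRadK {𝕜 : Type*} [RCLike 𝕜] {n : Type*} [Fintype n] [DecidableEq n]
    (M : Matrix n n 𝕜) : ℝ :=
  specRad (M.map (rcToComplex 𝕜))

variable {𝕜 : Type*} [RCLike 𝕜]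

/-- `vec²` of an `N × N` array of `n_x × n_x` blocks `S = [S_{ℓi}]` (block `S ℓ i` sits in
block-row `ℓ` and block-column `i`): the index `((i, ℓ), (c, r))` addresses the entry in row `r`
and column `c` of the block `S_{ℓ i}`, corresponding to the stacking
`vec(S₁₁),…,vec(S_{N1}), vec(S₁₂),…,vec(S_{NN})` with column-major `vec`. -/
def vec2 {N nx : ℕ} (S : Fin N → Fin N → Matrix (Fin nx) (Fin nx) 𝕜) :
    (Fin N × Fin N) × Fin nx × Fin nx → 𝕜 :=
  fun q => S q.1.2 q.1.1 q.2.2 q.2.1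

/-- `vec²` of an `N × N` array of vectors in `𝕜^{n_x}`. -/
def vec2v {N nx : ℕ} (m : Fin N → Fin N → (Fin nx → 𝕜)) :
    (Fin N × Fin N) × Fin nx → 𝕜 :=
  fun q => m q.1.2 q.1.1 q.2

/-- The operator `L`, blockwise: `L_{ij}(S)`. -/
def Lop {N nx nu : ℕ} (A : Matrix (Fin nx) (Fin nx) 𝕜) (B : Matrix (Fin nx) (Fin nu) 𝕜)
    (K : Fin N → Matrix (Fin nu) (Fin nx) 𝕜) (p : Fin N → Fin N → ℝ) (νh : Fin N → ℝ)
    (S : Fin N → Fin N → Matrix (Fin nx) (Fin nx) 𝕜) (i j : Fin N) :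
    Matrix (Fin nx) (Fin nx) 𝕜 :=
  ((p i j : ℝ) : 𝕜) •
    (A * (∑ ℓ, S ℓ i) * Aᴴ
      + ((νh i : ℝ) : 𝕜) • (B * (∑ ℓ, K ℓ * S ℓ i * (K ℓ)ᴴ) * Bᴴ)
      + ((νh i : ℝ) : 𝕜) • (A * (∑ ℓ, S ℓ i * (K ℓ)ᴴ) * Bᴴ)
      + ((νh i : ℝ) : 𝕜) • (B * (∑ ℓ, K ℓ * S ℓ i) * Aᴴ))

/-- The operator `T`, blockwise: `T_{ℓi}(S)`. -/
def Tadj {N nx nu : ℕ} (A : Matrix (Fin nx) (Fin nx) 𝕜) (B : Matrix (Fin nx) (Fin nu) 𝕜)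
    (K : Fin N → Matrix (Fin nu) (Fin nx) 𝕜) (p : Fin N → Fin N → ℝ) (νh : Fin N → ℝ)
    (S : Fin N → Fin N → Matrix (Fin nx) (Fin nx) 𝕜) (ℓ i : Fin N) :
    Matrix (Fin nx) (Fin nx) 𝕜 :=
  Aᴴ * (∑ j, ((p i j : ℝ) : 𝕜) • S i j) * A
    + ((νh i : ℝ) : 𝕜) • ((K ℓ)ᴴ * Bᴴ * (∑ j, ((p i j : ℝ) : 𝕜) • S i j) * (B * K ℓ))
    + ((νh i : ℝ) : 𝕜) • ((K ℓ)ᴴ * Bᴴ * (∑ j, ((p i j : ℝ) : 𝕜) • S i j) * A)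
    + ((νh i : ℝ) : 𝕜) • (Aᴴ * (∑ j, ((p i j : ℝ) : 𝕜) • S i j) * (B * K ℓ))

/-- σ-algebra of the "past" at time `k`: generated by `θ_{-1},…,θ_{k-1}` and `ν_0,…,ν_{k-1}`. -/
def pastSig {Ω : Type*} {N : ℕ} (θ : ℤ → Ω → Fin N) (ν : ℕ → Ω → Bool) (k : ℕ) :
    MeasurableSpace Ω :=
  (⨆ t : ℤ, ⨆ (_ : -1 ≤ t), ⨆ (_ : t < (k : ℤ)), MeasurableSpace.comap (θ t) ⊤) ⊔
    ⨆ t : ℕ, ⨆ (_ : t < k), MeasurableSpace.comap (ν t) ⊤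

/-- σ-algebra generated by `θ_{-1},…,θ_{k-1}`. -/
def pastTheta {Ω : Type*} {N : ℕ} (θ : ℤ → Ω → Fin N) (k : ℤ) : MeasurableSpace Ω :=
  ⨆ t : ℤ, ⨆ (_ : -1 ≤ t), ⨆ (_ : t < k), MeasurableSpace.comap (θ t) ⊤

/-- σ-algebra generated by the pairs `(θ_t, θ_{t-1})` for `0 ≤ t ≤ k-1`. -/
def pastPair {Ω : Type*} {N : ℕ} (θ : ℤ → Ω → Fin N) (k : ℕ) : MeasurableSpace Ω :=
  ⨆ t : ℕ, ⨆ (_ : t < k),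
    MeasurableSpace.comap (fun ω => (θ (t : ℤ) ω, θ ((t : ℤ) - 1) ω)) ⊤

/-- Indicator-weighted first moment `m_{ℓi}^{(k)} = E[x_k 1_{θ_k = i, θ_{k-1} = ℓ}]`. -/
def mMom {Ω : Type*} [MeasurableSpace Ω] (μ : Measure Ω) {N nx : ℕ}
    (θ : ℤ → Ω → Fin N) (x : ℕ → Ω → Fin nx → 𝕜) (k : ℕ) (ℓ i : Fin N) : Fin nx → 𝕜 :=
  fun r => ∫ ω in {ω | θ (k : ℤ) ω = i ∧ θ ((k : ℤ) - 1) ω = ℓ}, x k ω r ∂μ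

/-- Indicator-weighted second moment `M_{ℓi}^{(k)} = E[x_k x_k^* 1_{θ_k = i, θ_{k-1} = ℓ}]`. -/
def MMom {Ω : Type*} [MeasurableSpace Ω] (μ : Measure Ω) {N nx : ℕ}
    (θ : ℤ → Ω → Fin N) (x : ℕ → Ω → Fin nx → 𝕜) (k : ℕ) (ℓ i : Fin N) :
    Matrix (Fin nx) (Fin nx) 𝕜 :=
  Matrix.of fun r c =>
    ∫ ω in {ω | θ (k : ℤ) ω = i ∧ θ ((k : ℤ) - 1) ω = ℓ}, x k ω r * star (x k ω c) ∂μ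

/-- Joint probability `π_{ℓi}^{(k)} = Pr(θ_k = i, θ_{k-1} = ℓ)`. -/
def piP {Ω : Type*} [MeasurableSpace Ω] (μ : Measure Ω) {N : ℕ}
    (θ : ℤ → Ω → Fin N) (k : ℕ) (ℓ i : Fin N) : ℝ :=
  (μ {ω | θ (k : ℤ) ω = i ∧ θ ((k : ℤ) - 1) ω = ℓ}).toReal

/-- A measure on a real vector space is Gaussian if every real-linear functional pushes it
forward to a one-dimensional Gaussian law. -/
def IsGaussianLaw {E : Type*} [AddCommGroup E] [Module ℝ E] [MeasurableSpace E]
    (γ : Measure E) : Prop :=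
  ∀ L : E →ₗ[ℝ] ℝ, ∃ (m : ℝ) (v : NNReal), γ.map L = ProbabilityTheory.gaussianReal m v

/-! ### Spectral radius and powers of a matrix -/

section Spectral

open scoped Topology

attribute [local instance] Matrix.linftyOpNormedRing Matrix.linftyOpNormedAlgebra

theorem specRad_lt_one_iff_forall {n : Type*} [Fintype n] [DecidableEq n] [Nonempty n]
    (M : Matrix n n ℂ) : specRad M < 1 ↔ ∀ z ∈ spectrum ℂ M, ‖z‖ < 1 := by
  have hc : IsCompact ((fun z : ℂ => ‖z‖) '' spectrum ℂ M) :=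
    (spectrum.isCompact M).image continuous_norm
  have hne : ((fun z : ℂ => ‖z‖) '' spectrum ℂ M).Nonempty := (spectrum.nonempty M).image _
  constructor
  · intro h z hz
    exact (le_csSup hc.bddAbove ⟨z, hz, rfl⟩).trans_lt h
  · intro h
    obtain ⟨z, hz, hz'⟩ := hc.sSup_mem hne
    unfold specRad
    rw [← hz']
    exact h z hz

/-- The powers of a complex matrix tend to zero exactly when its spectral radius is below one;
the backward direction is Gelfand's formula. -/
theorem pow_tendsto_zero_iff {n : Type*} [Fintype n] [DecidableEq n] [Nonempty n]
    (M : Matrix n n ℂ) :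
    (∀ a b, Tendsto (fun k : ℕ => (M ^ k) a b) atTop (𝓝 0)) ↔ specRad M < 1 := by
  have hT : (∀ a b, Tendsto (fun k : ℕ => (M ^ k) a b) atTop (𝓝 0)) ↔
      Tendsto (fun k : ℕ => M ^ k) atTop (𝓝 0) := by
    constructor
    · intro h
      exact tendsto_pi_nhds.2 fun a => tendsto_pi_nhds.2 fun b => h a b
    · intro h a b
      exact tendsto_pi_nhds.1 (tendsto_pi_nhds.1 h a) b
  rw [hT, specRad_lt_one_iff_forall]
  constructor
  · intro h z hz
    by_contra! hz1
    have h0 : Tendsto (fun k : ℕ => ‖M ^ k‖ * ‖(1 : Matrix n n ℂ)‖) atTop (𝓝 0) := by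
      simpa using h.norm.mul_const ‖(1 : Matrix n n ℂ)‖
    have hev := h0.eventually (gt_mem_nhds (zero_lt_one' ℝ))
    obtain ⟨k, hk⟩ := hev.exists
    have h1 := spectrum.norm_le_norm_mul_of_mem (spectrum.pow_mem_pow M k hz)
    rw [norm_pow] at h1
    linarith [one_le_pow₀ hz1 (n := k)]
  · intro h
    have hr : spectralRadius ℂ M < ((1 : NNReal) : ENNReal) :=
      spectrum.spectralRadius_lt_of_forall_lt M fun z hz => by
        have := h z hz
        exact_mod_cast this
    obtain ⟨r, hr1, hr2⟩ := ENNReal.lt_iff_exists_nnreal_btwn.1 hr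
    have hr2' : r < 1 := by exact_mod_cast hr2
    have hG := spectrum.pow_nnnorm_pow_one_div_tendsto_nhds_spectralRadius M
    have hev := hG.eventually (gt_mem_nhds hr1)
    refine tendsto_zero_iff_norm_tendsto_zero.2 ?_
    have hp : Tendsto (fun k : ℕ => (r : ℝ) ^ k) atTop (𝓝 0) :=
      tendsto_pow_atTop_nhds_zero_of_lt_one r.2 (by exact_mod_cast hr2')
    refine squeeze_zero' (Eventually.of_forall fun k => norm_nonneg _) ?_ hp
    filter_upwards [hev, eventually_gt_atTop 0] with k hk hk0
    have hk0' : (0 : ℝ) < k := by exact_mod_cast hk0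
    have h1 : (‖M ^ k‖₊ : ENNReal) ≤ (r : ENNReal) ^ (k : ℝ) := by
      have h2 := ENNReal.rpow_le_rpow hk.le hk0'.le
      rwa [← ENNReal.rpow_mul, one_div_mul_cancel hk0'.ne', ENNReal.rpow_one] at h2
    rw [ENNReal.rpow_natCast] at h1
    exact_mod_cast h1

end Spectral

theorem norm_rcToComplex (z : 𝕜) : ‖rcToComplex 𝕜 z‖ = ‖z‖ := by
  have h1 : ‖rcToComplex 𝕜 z‖ ^ 2 = ‖z‖ ^ 2 := by
    rw [Complex.sq_norm, ← RCLike.normSq_eq_def', RCLike.normSq_apply, Complex.normSq_apply]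
    rfl
  exact (sq_eq_sq₀ (norm_nonneg _) (norm_nonneg _)).1 h1

theorem specRadK_lt_one_iff {n : Type*} [Fintype n] [DecidableEq n] [Nonempty n]
    (M : Matrix n n 𝕜) :
    specRadK M < 1 ↔ ∀ a b, Tendsto (fun k : ℕ => (M ^ k) a b) atTop (nhds 0) := by
  unfold specRadK
  rw [← pow_tendsto_zero_iff]
  refine forall₂_congr fun a b => ?_
  have h : ∀ k : ℕ, (M.map (rcToComplex 𝕜) ^ k) a b = rcToComplex 𝕜 ((M ^ k) a b) := by
    intro k
    have := (map_pow (rcToComplex 𝕜).mapMatrix M k).symm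
    exact congrFun (congrFun this a) b
  rw [tendsto_zero_iff_norm_tendsto_zero,
    tendsto_zero_iff_norm_tendsto_zero (f := fun k => (M ^ k) a b)]
  simp only [h, norm_rcToComplex]

/-! ### The mode process and the closed-loop trajectories -/

/-- The pair of processes `(θ, ν)` is driven by the transition matrix `p` and the observation
probabilities `νh`: given `θ_k = i`, the pair `(θ_{k+1}, ν_k)` has law `p i · ⊗ Bernoulli (νh i)`
and is independent of the past `pastSig θ ν k`. The law of `(θ_{-1}, θ_0)` is arbitrary. -/
structure IsModeProcess {Ω : Type*} [MeasurableSpace Ω] (μ : Measure Ω) {N : ℕ}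
    (p : Fin N → Fin N → ℝ) (νh : Fin N → ℝ) (θ : ℤ → Ω → Fin N) (ν : ℕ → Ω → Bool) :
    Prop where
  meas_mode : ∀ t, Measurable (θ t)
  meas_obs : ∀ t, Measurable (ν t)
  step : ∀ (k : ℕ) (i j : Fin N) (b : Bool) (E : Set Ω),
    MeasurableSet[pastSig θ ν k] E →
    (μ ({ω | θ ((k : ℤ) + 1) ω = j ∧ ν k ω = b ∧ θ (k : ℤ) ω = i} ∩ E)).toReal
      = p i j * (if b then νh i else 1 - νh i) * (μ ({ω | θ (k : ℤ) ω = i} ∩ E)).toReal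

/-- The closed-loop matrix `A + b B K_ℓ` in force when `ν_k = b` and `θ_{k-1} = ℓ`. -/
def clMat {N nx nu : ℕ} (A : Matrix (Fin nx) (Fin nx) 𝕜) (B : Matrix (Fin nx) (Fin nu) 𝕜)
    (K : Fin N → Matrix (Fin nu) (Fin nx) 𝕜) (b : Bool) (ℓ : Fin N) :
    Matrix (Fin nx) (Fin nx) 𝕜 :=
  A + (if b then (1 : 𝕜) else 0) • (B * K ℓ)

/-- `x` is a trajectory of the closed-loop system with deterministic initial state `x0`. -/
structure IsTrajectory {Ω : Type*} {N nx nu : ℕ} (A : Matrix (Fin nx) (Fin nx) 𝕜)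
    (B : Matrix (Fin nx) (Fin nu) 𝕜) (K : Fin N → Matrix (Fin nu) (Fin nx) 𝕜)
    (θ : ℤ → Ω → Fin N) (ν : ℕ → Ω → Bool) (x : ℕ → Ω → Fin nx → 𝕜) (x0 : Fin nx → 𝕜) :
    Prop where
  start : ∀ ω, x 0 ω = x0
  next : ∀ (k : ℕ) (ω : Ω),
    x (k + 1) ω = clMat A B K (ν k ω) (θ ((k : ℤ) - 1) ω) *ᵥ x k ω

/-- The cross moment `E[x_k y_k^* 1_{θ_k = i, θ_{k-1} = ℓ}]` of two trajectories driven by the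
same modes. For `x = y` it is the second moment `MMom`. -/
def crossMom {Ω : Type*} [MeasurableSpace Ω] (μ : Measure Ω) {N nx : ℕ}
    (θ : ℤ → Ω → Fin N) (x y : ℕ → Ω → Fin nx → 𝕜) (k : ℕ) (ℓ i : Fin N) :
    Matrix (Fin nx) (Fin nx) 𝕜 :=
  Matrix.of fun r c =>
    ∫ ω in {ω | θ (k : ℤ) ω = i ∧ θ ((k : ℤ) - 1) ω = ℓ}, x k ω r * star (y k ω c) ∂μ

section Past

variable {Ω : Type*} {N nx nu : ℕ} {θ : ℤ → Ω → Fin N} {ν : ℕ → Ω → Bool}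

theorem pastSig_mono {k m : ℕ} (h : k ≤ m) : pastSig θ ν k ≤ pastSig θ ν m := by
  unfold pastSig
  refine sup_le_sup ?_ ?_
  · exact iSup_mono fun t => iSup_mono fun _ => iSup_le fun ht =>
      le_iSup_of_le (by omega) le_rfl
  · exact iSup_mono fun t => iSup_le fun ht => le_iSup_of_le (by omega) le_rfl

theorem measurable_prev_mode (k : ℕ) :
    Measurable[pastSig θ ν k] (θ ((k : ℤ) - 1)) := by
  rw [measurable_iff_comap_le]
  refine le_trans ?_ le_sup_left
  exact le_iSup_of_le ((k : ℤ) - 1) (le_iSup_of_le (by omega) (le_iSup_of_le (by omega) le_rfl))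

theorem measurable_obs (k : ℕ) : Measurable[pastSig θ ν (k + 1)] (ν k) := by
  rw [measurable_iff_comap_le]
  refine le_trans ?_ le_sup_right
  exact le_iSup_of_le k (le_iSup_of_le (by omega) le_rfl)

theorem pastSig_le [MeasurableSpace Ω] (hθ : ∀ t, Measurable (θ t)) (hν : ∀ t, Measurable (ν t))
    (k : ℕ) : pastSig θ ν k ≤ ‹MeasurableSpace Ω› := by
  refine sup_le ?_ ?_
  · exact iSup_le fun t => iSup_le fun _ => iSup_le fun _ => (hθ t).comap_le
  · exact iSup_le fun t => iSup_le fun _ => (hν t).comap_le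

theorem measurable_clMat_mulVec {m : MeasurableSpace Ω} (A : Matrix (Fin nx) (Fin nx) 𝕜)
    (B : Matrix (Fin nx) (Fin nu) 𝕜) (K : Fin N → Matrix (Fin nu) (Fin nx) 𝕜)
    {b : Ω → Bool} {t : Ω → Fin N} {v : Ω → Fin nx → 𝕜} (hb : Measurable b) (ht : Measurable t)
    (hv : Measurable v) : Measurable fun ω => clMat A B K (b ω) (t ω) *ᵥ v ω := by
  refine measurable_pi_iff.2 fun r => ?_
  simp only [Matrix.mulVec, dotProduct]
  refine Finset.measurable_sum _ fun c _ => ?_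
  refine Measurable.mul ?_ ((measurable_pi_apply c).comp hv)
  exact (measurable_of_countable (fun q : Bool × Fin N => clMat A B K q.1 q.2 r c)).comp
    (hb.prodMk ht)

theorem IsTrajectory.measurable {A : Matrix (Fin nx) (Fin nx) 𝕜}
    {B : Matrix (Fin nx) (Fin nu) 𝕜} {K : Fin N → Matrix (Fin nu) (Fin nx) 𝕜}
    {x : ℕ → Ω → Fin nx → 𝕜} {x0 : Fin nx → 𝕜} (hx : IsTrajectory A B K θ ν x x0) (k : ℕ) :
    Measurable[pastSig θ ν k] (x k) := by
  induction k with
  | zero =>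
    have : x 0 = fun _ => x0 := funext hx.start
    rw [this]
    exact measurable_const
  | succ k ih =>
    rw [show x (k + 1) = _ from funext (hx.next k)]
    have hle : pastSig θ ν k ≤ pastSig θ ν (k + 1) := pastSig_mono (Nat.le_succ k)
    exact measurable_clMat_mulVec A B K (measurable_obs k)
      ((measurable_prev_mode k).mono hle le_rfl) (ih.mono hle le_rfl)

theorem IsTrajectory.bounded {A : Matrix (Fin nx) (Fin nx) 𝕜}
    {B : Matrix (Fin nx) (Fin nu) 𝕜} {K : Fin N → Matrix (Fin nu) (Fin nx) 𝕜}
    {x : ℕ → Ω → Fin nx → 𝕜} {x0 : Fin nx → 𝕜} (hx : IsTrajectory A B K θ ν x x0) (k : ℕ) :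
    ∃ C, ∀ ω r, ‖x k ω r‖ ≤ C := by
  induction k with
  | zero => exact ⟨‖x0‖, fun ω r => by rw [hx.start]; exact norm_le_pi_norm x0 r⟩
  | succ k ih =>
    obtain ⟨C, hC⟩ := ih
    refine ⟨∑ b, ∑ ℓ, ∑ r, ∑ c, ‖clMat A B K b ℓ r c‖ * C, fun ω r => ?_⟩
    have h0 : ∀ b ℓ r c, 0 ≤ ‖clMat A B K b ℓ r c‖ * C := fun b ℓ r c =>
      mul_nonneg (norm_nonneg _) ((norm_nonneg _).trans (hC ω c))
    rw [hx.next]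
    simp only [Matrix.mulVec, dotProduct]
    refine (norm_sum_le _ _).trans ?_
    calc _ ≤ ∑ c, ‖clMat A B K (ν k ω) (θ ((k : ℤ) - 1) ω) r c‖ * C := by
          refine Finset.sum_le_sum fun c _ => ?_
          rw [norm_mul]
          exact mul_le_mul_of_nonneg_left (hC ω c) (norm_nonneg _)
      _ ≤ ∑ r, ∑ c, ‖clMat A B K (ν k ω) (θ ((k : ℤ) - 1) ω) r c‖ * C :=
          Finset.single_le_sum
            (f := fun r => ∑ c, ‖clMat A B K (ν k ω) (θ ((k : ℤ) - 1) ω) r c‖ * C)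
            (fun r _ => Finset.sum_nonneg fun c _ => h0 _ _ _ _) (Finset.mem_univ r)
      _ ≤ ∑ ℓ, ∑ r, ∑ c, ‖clMat A B K (ν k ω) ℓ r c‖ * C :=
          Finset.single_le_sum
            (f := fun ℓ => ∑ r, ∑ c, ‖clMat A B K (ν k ω) ℓ r c‖ * C)
            (fun ℓ _ => Finset.sum_nonneg fun r _ => Finset.sum_nonneg fun c _ => h0 _ _ _ _)
            (Finset.mem_univ _)
      _ ≤ _ :=
          Finset.single_le_sum
            (f := fun b => ∑ ℓ, ∑ r, ∑ c, ‖clMat A B K b ℓ r c‖ * C)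
            (fun b _ => Finset.sum_nonneg fun ℓ _ => Finset.sum_nonneg fun r _ =>
              Finset.sum_nonneg fun c _ => h0 _ _ _ _)
            (Finset.mem_univ _)

end Past

/-- Convergence of `E[f_k f_k^*]` in `𝕜` is convergence of the real numbers `E‖f_k‖²`. -/
theorem tendsto_integral_norm_sq {Ω : Type*} [MeasurableSpace Ω] {μ : Measure Ω}
    {f : ℕ → Ω → 𝕜}
    (h : Tendsto (fun k => ∫ ω, f k ω * star (f k ω) ∂μ) atTop (nhds 0)) :
    Tendsto (fun k => ∫ ω, ‖f k ω‖ ^ 2 ∂μ) atTop (nhds 0) := by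
  have he : ∀ k, ∫ ω, f k ω * star (f k ω) ∂μ = ((∫ ω, ‖f k ω‖ ^ 2 ∂μ : ℝ) : 𝕜) := by
    intro k
    rw [← integral_ofReal]
    refine integral_congr_ae (Eventually.of_forall fun ω => ?_)
    simp only [RCLike.star_def, RCLike.mul_conj]
    push_cast
    rfl
  simp only [he] at h
  have hre := ((RCLike.continuous_re (K := 𝕜)).tendsto 0).comp h
  simpa only [Function.comp_def, RCLike.ofReal_re, map_zero] using hre

theorem integrable_norm_sq {Ω : Type*} [MeasurableSpace Ω] {μ : Measure Ω} {f : Ω → 𝕜}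
    (h : Integrable (fun ω => f ω * star (f ω)) μ) :
    Integrable (fun ω => ‖f ω‖ ^ 2) μ := by
  refine h.norm.congr (Eventually.of_forall fun ω => ?_)
  simp [sq]

section Moments

variable {Ω : Type*} [MeasurableSpace Ω] {μ : Measure Ω} [IsProbabilityMeasure μ]
  {N nx nu : ℕ} {p : Fin N → Fin N → ℝ} {νh : Fin N → ℝ}
  {θ : ℤ → Ω → Fin N} {ν : ℕ → Ω → Bool}
  {A : Matrix (Fin nx) (Fin nx) 𝕜} {B : Matrix (Fin nx) (Fin nu) 𝕜}
  {K : Fin N → Matrix (Fin nu) (Fin nx) 𝕜}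
  {x y : ℕ → Ω → Fin nx → 𝕜} {x0 y0 : Fin nx → 𝕜}

/-- The Markov property in integrated form, for functions of the past. -/
theorem IsModeProcess.setIntegral_step (hm : IsModeProcess μ p νh θ ν)
    (hp : ∀ i j, 0 ≤ p i j) (hνh : ∀ i, νh i ∈ Set.Icc (0 : ℝ) 1) (k : ℕ) (i j : Fin N)
    (b : Bool) {f : Ω → 𝕜} (hf : Measurable[pastSig θ ν k] f) :
    ∫ ω in {ω | θ ((k : ℤ) + 1) ω = j ∧ ν k ω = b ∧ θ (k : ℤ) ω = i}, f ω ∂μ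
      = (p i j * (if b then νh i else 1 - νh i)) • ∫ ω in {ω | θ (k : ℤ) ω = i}, f ω ∂μ := by
  have hle := pastSig_le hm.meas_mode hm.meas_obs k
  have hc : 0 ≤ p i j * (if b then νh i else 1 - νh i) := by
    refine mul_nonneg (hp i j) ?_
    have := hνh i
    split_ifs <;> linarith [this.1, this.2]
  set c := p i j * (if b then νh i else 1 - νh i) with hcdef
  have hsm : StronglyMeasurable[pastSig θ ν k] f := hf.stronglyMeasurable
  have htrim : (μ.restrict {ω | θ ((k : ℤ) + 1) ω = j ∧ ν k ω = b ∧ θ (k : ℤ) ω = i}).trim hle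
      = (ENNReal.ofReal c • μ.restrict {ω | θ (k : ℤ) ω = i}).trim hle := by
    refine @Measure.ext _ (pastSig θ ν k) _ _ fun E hE => ?_
    have hE' := hle _ hE
    rw [trim_measurableSet_eq hle hE, trim_measurableSet_eq hle hE, Measure.smul_apply,
      Measure.restrict_apply hE', Measure.restrict_apply hE', smul_eq_mul,
      Set.inter_comm E, Set.inter_comm E]
    refine (ENNReal.toReal_eq_toReal_iff' (measure_ne_top _ _)
      (ENNReal.mul_ne_top ENNReal.ofReal_ne_top (measure_ne_top _ _))).1 ?_
    rw [ENNReal.toReal_mul, ENNReal.toReal_ofReal hc]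
    exact hm.step k i j b E hE
  rw [integral_trim hle hsm, htrim, ← integral_trim hle hsm, integral_smul_measure,
    ENNReal.toReal_ofReal hc]

theorem IsTrajectory.integrable_mul (hm : IsModeProcess μ p νh θ ν)
    (hx : IsTrajectory A B K θ ν x x0) (hy : IsTrajectory A B K θ ν y y0) (k : ℕ)
    (r c : Fin nx) : Integrable (fun ω => x k ω r * star (y k ω c)) μ := by
  have hle := pastSig_le hm.meas_mode hm.meas_obs k
  obtain ⟨C, hC⟩ := hx.bounded k
  obtain ⟨D, hD⟩ := hy.bounded k
  have h1 : Measurable (x k) := (hx.measurable k).mono hle le_rfl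
  have h2 : Measurable (y k) := (hy.measurable k).mono hle le_rfl
  refine Integrable.of_bound (C := C * D) ?_ (Eventually.of_forall fun ω => ?_)
  · have h3 : Measurable fun ω => star (y k ω c) :=
      continuous_star.measurable.comp ((measurable_pi_apply c).comp h2)
    exact (((measurable_pi_apply r).comp h1).mul h3).aestronglyMeasurable
  · rw [norm_mul, norm_star]
    exact mul_le_mul (hC ω r) (hD ω c) (norm_nonneg _) ((norm_nonneg _).trans (hC ω r))

theorem IsTrajectory.integrable (hm : IsModeProcess μ p νh θ ν)
    (hx : IsTrajectory A B K θ ν x x0) (k : ℕ) (r : Fin nx) :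
    Integrable (fun ω => x k ω r) μ := by
  have hle := pastSig_le hm.meas_mode hm.meas_obs k
  obtain ⟨C, hC⟩ := hx.bounded k
  have h1 : Measurable (x k) := (hx.measurable k).mono hle le_rfl
  exact Integrable.of_bound ((measurable_pi_apply r).comp h1).aestronglyMeasurable C
    (Eventually.of_forall fun ω => hC ω r)

/-- Summing over the closed-loop matrices recovers the blocks of `L`. -/
theorem Lop_eq_sum (S : Fin N → Fin N → Matrix (Fin nx) (Fin nx) 𝕜) (i j : Fin N) :
    Lop A B K p νh S i j = ∑ b : Bool, ∑ ℓ,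
      (p i j * (if b then νh i else 1 - νh i)) •
        (clMat A B K b ℓ * S ℓ i * (clMat A B K b ℓ)ᴴ) := by
  have hsm : ∀ (t : ℝ) (X : Matrix (Fin nx) (Fin nx) 𝕜), t • X = (t : 𝕜) • X := fun t X => by
    ext r c
    simp [RCLike.real_smul_eq_coe_mul]
  have hterm : ∀ ℓ, ∑ b : Bool, (p i j * (if b then νh i else 1 - νh i)) •
        (clMat A B K b ℓ * S ℓ i * (clMat A B K b ℓ)ᴴ)
      = ((p i j : ℝ) : 𝕜) • (A * S ℓ i * Aᴴ
        + ((νh i : ℝ) : 𝕜) • (B * (K ℓ * S ℓ i * (K ℓ)ᴴ) * Bᴴ)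
        + ((νh i : ℝ) : 𝕜) • (A * (S ℓ i * (K ℓ)ᴴ) * Bᴴ)
        + ((νh i : ℝ) : 𝕜) • (B * (K ℓ * S ℓ i) * Aᴴ)) := by
    intro ℓ
    have h0 : clMat A B K false ℓ = A := by simp [clMat]
    have h1 : clMat A B K true ℓ = A + B * K ℓ := by simp [clMat]
    simp only [hsm, Fintype.sum_bool, h0, h1, if_true, Bool.false_eq_true, if_false,
      Matrix.conjTranspose_add, Matrix.conjTranspose_mul, add_mul, mul_add, Matrix.mul_assoc]
    push_cast
    module
  rw [Finset.sum_comm]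
  simp only [hterm]
  simp only [Lop, Matrix.mul_sum, Matrix.sum_mul, Finset.smul_sum, ← Finset.sum_add_distrib,
    smul_add]

theorem mulVec_mul_star_mulVec (F : Matrix (Fin nx) (Fin nx) 𝕜) (v w : Fin nx → 𝕜)
    (r c : Fin nx) : (F *ᵥ v) r * star ((F *ᵥ w) c)
      = ∑ c', ∑ r', F r r' * (v r' * star (w c')) * star (F c c') := by
  simp only [Matrix.mulVec, dotProduct, star_sum, Finset.sum_mul_sum, star_mul']
  rw [Finset.sum_comm]
  exact Finset.sum_congr rfl fun _ _ => Finset.sum_congr rfl fun _ _ => by ring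

/-- Conditionally on `θ_k = i`, `θ_{k-1} = ℓ` and `ν_k = b` the state is multiplied by the fixed
matrix `clMat A B K b ℓ`, so the cross moments evolve by `L`. -/
theorem crossMom_succ (hm : IsModeProcess μ p νh θ ν)
    (hp : ∀ i j, 0 ≤ p i j) (hνh : ∀ i, νh i ∈ Set.Icc (0 : ℝ) 1)
    (hx : IsTrajectory A B K θ ν x x0) (hy : IsTrajectory A B K θ ν y y0) (k : ℕ) :
    crossMom μ θ x y (k + 1) = Lop A B K p νh (crossMom μ θ x y k) := by
  have hle := pastSig_le hm.meas_mode hm.meas_obs k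
  have hmode : ∀ (t : ℤ) (i : Fin N), MeasurableSet {ω | θ t ω = i} := fun t i =>
    hm.meas_mode t (measurableSet_singleton i)
  have hobs : ∀ (t : ℕ) (b : Bool), MeasurableSet {ω | ν t ω = b} := fun t b =>
    hm.meas_obs t (measurableSet_singleton b)
  funext i j
  rw [Lop_eq_sum]
  ext r c
  set h : Bool → Fin N → Ω → 𝕜 := fun b ℓ ω =>
    (clMat A B K b ℓ *ᵥ x k ω) r * star ((clMat A B K b ℓ *ᵥ y k ω) c) with hdef
  have hint : ∀ b ℓ, Integrable (h b ℓ) μ := by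
    intro b ℓ
    simp only [hdef, mulVec_mul_star_mulVec]
    exact integrable_finsetSum _ fun c' _ => integrable_finsetSum _ fun r' _ =>
      ((hx.integrable_mul hm hy k r' c').const_mul _).mul_const _
  have hval : ∀ b ℓ, ∫ ω in {ω | θ (k : ℤ) ω = i ∧ θ ((k : ℤ) - 1) ω = ℓ}, h b ℓ ω ∂μ
      = (clMat A B K b ℓ * crossMom μ θ x y k ℓ i * (clMat A B K b ℓ)ᴴ) r c := by
    intro b ℓ
    simp only [hdef, mulVec_mul_star_mulVec]
    rw [integral_finsetSum _ fun c' _ => integrable_finsetSum _ fun r' _ =>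
      (((hx.integrable_mul hm hy k r' c').const_mul _).mul_const _).integrableOn]
    rw [Matrix.mul_apply]
    refine Finset.sum_congr rfl fun c' _ => ?_
    rw [integral_finsetSum _ fun r' _ =>
      (((hx.integrable_mul hm hy k r' c').const_mul _).mul_const _).integrableOn]
    rw [Matrix.mul_apply, Finset.sum_mul]
    refine Finset.sum_congr rfl fun r' _ => ?_
    rw [integral_mul_const, integral_const_mul]
    rfl
  have hmeas : ∀ b, Measurable[pastSig θ ν k] fun ω => h b (θ ((k : ℤ) - 1) ω) ω := by
    intro b
    have h1 := @measurable_clMat_mulVec 𝕜 _ Ω N nx nu (pastSig θ ν k) A B K (fun _ => b) _ _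
      measurable_const (measurable_prev_mode k) (hx.measurable k)
    have h2 := @measurable_clMat_mulVec 𝕜 _ Ω N nx nu (pastSig θ ν k) A B K (fun _ => b) _ _
      measurable_const (measurable_prev_mode k) (hy.measurable k)
    exact ((measurable_pi_apply r).comp h1).mul
      (continuous_star.measurable.comp ((measurable_pi_apply c).comp h2))
  -- Split the integral over `{θ_k = i}` according to the value of `θ_{k-1}`.
  have hsplit : ∀ b, ∫ ω in {ω | θ (k : ℤ) ω = i}, h b (θ ((k : ℤ) - 1) ω) ω ∂μ
      = ∑ ℓ, ∫ ω in {ω | θ (k : ℤ) ω = i ∧ θ ((k : ℤ) - 1) ω = ℓ}, h b ℓ ω ∂μ := by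
    intro b
    have hS : {ω | θ (k : ℤ) ω = i}
        = ⋃ ℓ, {ω | θ (k : ℤ) ω = i ∧ θ ((k : ℤ) - 1) ω = ℓ} := by
      ext ω; simp
    have hSm : ∀ ℓ, MeasurableSet {ω | θ (k : ℤ) ω = i ∧ θ ((k : ℤ) - 1) ω = ℓ} :=
      fun ℓ => (hmode _ _).inter (hmode _ _)
    have hcongr : ∀ ℓ, Set.EqOn (h b ℓ) (fun ω => h b (θ ((k : ℤ) - 1) ω) ω)
        {ω | θ (k : ℤ) ω = i ∧ θ ((k : ℤ) - 1) ω = ℓ} := by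
      intro ℓ ω hω
      simp only [hω.2]
    rw [hS, integral_iUnion_fintype hSm]
    · exact Finset.sum_congr rfl fun ℓ _ => (setIntegral_congr_fun (hSm ℓ) (hcongr ℓ)).symm
    · intro a b' hab
      refine Set.disjoint_left.2 fun ω ha hb => hab (ha.2.symm.trans hb.2)
    · exact fun ℓ => (hint b ℓ).integrableOn.congr_fun (hcongr ℓ) (hSm ℓ)
  -- Split the integral at time `k + 1` according to the value of `ν_k`.
  have hS : {ω | θ ((k + 1 : ℕ) : ℤ) ω = j ∧ θ (((k + 1 : ℕ) : ℤ) - 1) ω = i}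
      = ⋃ b, {ω | θ ((k : ℤ) + 1) ω = j ∧ ν k ω = b ∧ θ (k : ℤ) ω = i} := by
    ext ω; simp
  have hSm : ∀ b, MeasurableSet {ω | θ ((k : ℤ) + 1) ω = j ∧ ν k ω = b ∧ θ (k : ℤ) ω = i} :=
    fun b => (hmode _ _).inter ((hobs _ _).inter (hmode _ _))
  have hL : crossMom μ θ x y (k + 1) i j r c
      = ∑ b, ∫ ω in {ω | θ ((k : ℤ) + 1) ω = j ∧ ν k ω = b ∧ θ (k : ℤ) ω = i},
          h b (θ ((k : ℤ) - 1) ω) ω ∂μ := by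
    simp only [crossMom, Matrix.of_apply]
    rw [hS, integral_iUnion_fintype hSm]
    · refine Finset.sum_congr rfl fun b _ => setIntegral_congr_fun (hSm b) fun ω hω => ?_
      simp only [hdef, hx.next, hy.next, hω.2.1]
    · intro a b' hab
      refine Set.disjoint_left.2 fun ω ha hb => hab (ha.2.1.symm.trans hb.2.1)
    · exact fun b => (hx.integrable_mul hm hy (k + 1) r c).integrableOn
  rw [hL, Matrix.sum_apply]
  refine Finset.sum_congr rfl fun b _ => ?_
  rw [hm.setIntegral_step hp hνh k i j b (hmeas b), hsplit, Matrix.sum_apply, Finset.smul_sum]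
  refine Finset.sum_congr rfl fun ℓ _ => ?_
  rw [hval, Matrix.smul_apply]

theorem vec2_crossMom (hm : IsModeProcess μ p νh θ ν)
    (hp : ∀ i j, 0 ≤ p i j) (hνh : ∀ i, νh i ∈ Set.Icc (0 : ℝ) 1)
    {Λ : Matrix ((Fin N × Fin N) × Fin nx × Fin nx) ((Fin N × Fin N) × Fin nx × Fin nx) 𝕜}
    (hΛ : ∀ S : Fin N → Fin N → Matrix (Fin nx) (Fin nx) 𝕜,
      vec2 (Lop A B K p νh S) = Matrix.mulVec Λ (vec2 S))
    (hx : IsTrajectory A B K θ ν x x0) (hy : IsTrajectory A B K θ ν y y0) (k : ℕ) :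
    vec2 (crossMom μ θ x y k) = (Λ ^ k) *ᵥ vec2 (crossMom μ θ x y 0) := by
  induction k with
  | zero => simp
  | succ k ih =>
    rw [crossMom_succ hm hp hνh hx hy, hΛ, ih, Matrix.mulVec_mulVec, pow_succ']

theorem sum_crossMom (hm : IsModeProcess μ p νh θ ν)
    (hx : IsTrajectory A B K θ ν x x0) (hy : IsTrajectory A B K θ ν y y0) (k : ℕ)
    (r c : Fin nx) :
    ∫ ω, x k ω r * star (y k ω c) ∂μ = ∑ q : Fin N × Fin N, crossMom μ θ x y k q.2 q.1 r c := by
  have hS : (Set.univ : Set Ω)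
      = ⋃ q : Fin N × Fin N, {ω | θ (k : ℤ) ω = q.1 ∧ θ ((k : ℤ) - 1) ω = q.2} := by
    ext ω; simp
  rw [← setIntegral_univ, hS, integral_iUnion_fintype]
  · rfl
  · exact fun q => (hm.meas_mode _ (measurableSet_singleton _)).inter
      (hm.meas_mode _ (measurableSet_singleton _))
  · intro a b hab
    exact Set.disjoint_left.2 fun ω ha hb =>
      hab (Prod.ext (ha.1.symm.trans hb.1) (ha.2.symm.trans hb.2))
  · exact fun q => (hx.integrable_mul hm hy k r c).integrableOn

/-- Convergence to zero in mean square implies convergence of the means to zero, by Jensen's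
inequality `‖E f‖² ≤ E‖f‖²`. -/
theorem tendsto_integral_of_sq {f : ℕ → Ω → 𝕜} (hf : ∀ k, Integrable (f k) μ)
    (hf2 : ∀ k, Integrable (fun ω => ‖f k ω‖ ^ 2) μ)
    (h : Tendsto (fun k => ∫ ω, ‖f k ω‖ ^ 2 ∂μ) atTop (nhds 0)) :
    Tendsto (fun k => ∫ ω, f k ω ∂μ) atTop (nhds 0) := by
  have hle : ∀ k, ‖∫ ω, f k ω ∂μ‖ ≤ √(∫ ω, ‖f k ω‖ ^ 2 ∂μ) := by
    intro k
    refine (norm_integral_le_integral_norm _).trans (Real.le_sqrt_of_sq_le ?_)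
    set m := ∫ ω, ‖f k ω‖ ∂μ with hmdef
    have h0 : 0 ≤ ∫ ω, (‖f k ω‖ - m) ^ 2 ∂μ := integral_nonneg fun ω => sq_nonneg _
    have h1 : ∫ ω, (‖f k ω‖ - m) ^ 2 ∂μ = (∫ ω, ‖f k ω‖ ^ 2 ∂μ) - m ^ 2 := by
      have h2 : ∀ ω, (‖f k ω‖ - m) ^ 2 = (‖f k ω‖ ^ 2 - 2 * m * ‖f k ω‖) + m ^ 2 :=
        fun ω => by ring
      simp only [h2]
      have h3 : Integrable (fun ω => ‖f k ω‖ ^ 2 - 2 * m * ‖f k ω‖) μ :=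
        (hf2 k).sub ((hf k).norm.const_mul _)
      rw [integral_add h3 (integrable_const _),
        integral_sub (hf2 k) ((hf k).norm.const_mul _), integral_const_mul, ← hmdef]
      simp
      ring
    linarith
  refine squeeze_zero_norm hle ?_
  simpa using h.sqrt

/-- By `2 ‖x y‖ ≤ ‖x‖² + ‖y‖²`, the cross moments are controlled by the second moments of the
two trajectories. -/
theorem norm_crossMom_le (hm : IsModeProcess μ p νh θ ν)
    (hx : IsTrajectory A B K θ ν x x0) (hy : IsTrajectory A B K θ ν y y0) (k : ℕ)
    (ℓ i : Fin N) (r c : Fin nx) :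
    ‖crossMom μ θ x y k ℓ i r c‖
      ≤ (∫ ω, ‖x k ω r‖ ^ 2 ∂μ) + ∫ ω, ‖y k ω c‖ ^ 2 ∂μ := by
  have h1 := integrable_norm_sq (hx.integrable_mul hm hx k r r)
  have h2 := integrable_norm_sq (hy.integrable_mul hm hy k c c)
  have h3 := (hx.integrable_mul hm hy k r c).norm
  simp only [crossMom, Matrix.of_apply]
  refine (norm_integral_le_integral_norm _).trans ?_
  refine (setIntegral_le_integral h3 (Eventually.of_forall fun _ => norm_nonneg _)).trans ?_
  rw [← integral_add h1 h2]
  refine integral_mono h3 (h1.add h2) fun ω => ?_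
  simp only [norm_mul, norm_star]
  nlinarith [sq_nonneg (‖x k ω r‖ - ‖y k ω c‖), sq_nonneg (‖x k ω r‖), sq_nonneg (‖y k ω c‖)]

end Moments

/-! ### Existence of the mode process -/

section Existence

variable {N : ℕ}

/-- The modes generated from the mode `i0` at time `0` by a sequence `ω` of maps
`Fin N → Fin N × Bool`: the map `ω k` sends `θ_k` to the pair `(θ_{k+1}, ν_k)`. -/
def modeRec (i0 : Fin N) (ω : ℕ → Fin N → Fin N × Bool) : ℕ → Fin N
  | 0 => i0
  | k + 1 => (ω k (modeRec i0 ω k)).1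

/-- The σ-algebra generated by the maps `ω 0, …, ω (k - 1)`. -/
@[reducible] def mapSig (N k : ℕ) : MeasurableSpace (ℕ → Fin N → Fin N × Bool) :=
  ⨆ t ∈ Set.Iio k, MeasurableSpace.comap (fun ω : ℕ → Fin N → Fin N × Bool => ω t) inferInstance

theorem mapSig_mono {k m : ℕ} (h : k ≤ m) : mapSig N k ≤ mapSig N m :=
  biSup_mono fun _ ht => lt_of_lt_of_le ht h

theorem measurable_mapSig_eval {t k : ℕ} (h : t < k) :
    Measurable[mapSig N k] (fun ω : ℕ → Fin N → Fin N × Bool => ω t) := by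
  rw [measurable_iff_comap_le]
  exact le_iSup₂_of_le t h le_rfl

theorem measurable_eval_apply {Ω : Type*} {m : MeasurableSpace Ω} {u : Ω → Fin N → Fin N × Bool}
    {t : Ω → Fin N} (hu : Measurable u) (ht : Measurable t) : Measurable fun ω => u ω (t ω) :=
  (measurable_of_countable fun q : (Fin N → Fin N × Bool) × Fin N => q.1 q.2).comp
    (hu.prodMk ht)

theorem measurable_modeRec (i0 : Fin N) (k : ℕ) :
    Measurable[mapSig N k] (fun ω => modeRec i0 ω k) := by
  induction k with
  | zero => exact measurable_const
  | succ k ih =>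
    have h1 : Measurable[mapSig N (k + 1)] fun ω => ω k (modeRec i0 ω k) :=
      measurable_eval_apply (measurable_mapSig_eval (Nat.lt_succ_self k))
        (ih.mono (mapSig_mono (Nat.le_succ k)) le_rfl)
    exact measurable_fst.comp h1

theorem exists_stepLaw {p : Fin N → Fin N → ℝ} {νh : Fin N → ℝ}
    (hp : ∀ i j, 0 ≤ p i j) (hrow : ∀ i, ∑ j, p i j = 1)
    (hνh : ∀ i, νh i ∈ Set.Icc (0 : ℝ) 1) (i : Fin N) :
    ∃ R : Measure (Fin N × Bool), IsProbabilityMeasure R ∧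
      ∀ j b, R {(j, b)} = ENNReal.ofReal (p i j * (if b then νh i else 1 - νh i)) := by
  have hnn : ∀ q : Fin N × Bool, 0 ≤ p i q.1 * (if q.2 then νh i else 1 - νh i) := by
    intro q
    refine mul_nonneg (hp i _) ?_
    have := hνh i
    split_ifs <;> linarith [this.1, this.2]
  let P : PMF (Fin N × Bool) := PMF.ofFintype
    (fun q => ENNReal.ofReal (p i q.1 * (if q.2 then νh i else 1 - νh i))) (by
      rw [← ENNReal.ofReal_sum_of_nonneg fun q _ => hnn q, Fintype.sum_prod_type]
      simp only [Fintype.sum_bool, if_true, Bool.false_eq_true, if_false, ← mul_add]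
      simp [hrow i])
  refine ⟨P.toMeasure, inferInstance, fun j b => ?_⟩
  rw [PMF.toMeasure_apply_singleton _ _ (measurableSet_singleton _)]
  rfl

/-- A mode process exists for every deterministic pair `(θ_{-1}, θ_0)`. It is generated by an
i.i.d. sequence of random maps `Fin N → Fin N × Bool`. -/
theorem exists_modeProcess {p : Fin N → Fin N → ℝ} {νh : Fin N → ℝ}
    (hp : ∀ i j, 0 ≤ p i j) (hrow : ∀ i, ∑ j, p i j = 1)
    (hνh : ∀ i, νh i ∈ Set.Icc (0 : ℝ) 1) (ℓ i0 : Fin N) :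
    ∃ (Ω : Type) (_ : MeasurableSpace Ω) (μ : Measure Ω) (_ : IsProbabilityMeasure μ)
      (θ : ℤ → Ω → Fin N) (ν : ℕ → Ω → Bool),
      IsModeProcess μ p νh θ ν ∧ (∀ ω, θ (-1) ω = ℓ) ∧ ∀ ω, θ 0 ω = i0 := by
  choose R hR hRs using exists_stepLaw hp hrow hνh
  let Q : Measure (Fin N → Fin N × Bool) := Measure.pi R
  let μ : Measure (ℕ → Fin N → Fin N × Bool) := Measure.infinitePi fun _ => Q
  let θ : ℤ → (ℕ → Fin N → Fin N × Bool) → Fin N := fun t ω =>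
    if 0 ≤ t then modeRec i0 ω t.toNat else ℓ
  let ν : ℕ → (ℕ → Fin N → Fin N × Bool) → Bool := fun k ω => (ω k (modeRec i0 ω k)).2
  have hle : ∀ k, mapSig N k ≤ MeasurableSpace.pi := fun k =>
    iSup₂_le fun t _ => (measurable_pi_apply t).comap_le
  have hθk : ∀ (t : ℤ) (k : ℕ), t ≤ k → Measurable[mapSig N k] (θ t) := by
    intro t k htk
    by_cases ht : 0 ≤ t
    · simp only [θ, ht, if_true]
      exact (measurable_modeRec i0 t.toNat).mono (mapSig_mono (by omega)) le_rfl
    · simp only [θ, ht, if_false]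
      exact measurable_const
  have hνk : ∀ t k : ℕ, t < k → Measurable[mapSig N k] (ν t) := by
    intro t k htk
    have h1 : Measurable[mapSig N k] fun ω => ω t (modeRec i0 ω t) :=
      measurable_eval_apply (measurable_mapSig_eval htk)
        ((measurable_modeRec i0 t).mono (mapSig_mono htk.le) le_rfl)
    exact measurable_snd.comp h1
  refine ⟨_, inferInstance, μ, inferInstance, θ, ν, ⟨?_, ?_, ?_⟩, ?_, ?_⟩
  · intro t
    exact (hθk t t.toNat (by omega)).mono (hle _) le_rfl
  · intro t
    exact (hνk t (t + 1) (Nat.lt_succ_self t)).mono (hle _) le_rfl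
  · intro k i j b E hE
    have hpast : pastSig θ ν k ≤ mapSig N k := by
      refine sup_le ?_ ?_
      · exact iSup_le fun t => iSup_le fun _ => iSup_le fun ht => (hθk t k ht.le).comap_le
      · exact iSup_le fun t => iSup_le fun ht => (hνk t k ht).comap_le
    have hE' : MeasurableSet[mapSig N k] ({ω | θ (k : ℤ) ω = i} ∩ E) :=
      MeasurableSet.inter (hθk k k le_rfl (measurableSet_singleton i)) (hpast _ hE)
    have hind : iIndepFun (fun (t : ℕ) (ω : ℕ → Fin N → Fin N × Bool) => ω t) μ :=
      iIndepFun_infinitePi (P := fun _ => Q) (X := fun _ u => u) fun _ => measurable_id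
    have hI := indep_iSup_of_disjoint (fun t => (measurable_pi_apply t).comap_le) hind.iIndep
      (S := {k}) (T := Set.Iio k) (by simp)
    have hsing : MeasurableSet {u : Fin N → Fin N × Bool | u i = (j, b)} :=
      measurable_pi_apply i (measurableSet_singleton _)
    have hF : MeasurableSet[⨆ t ∈ ({k} : Set ℕ), MeasurableSpace.comap
        (fun ω : ℕ → Fin N → Fin N × Bool => ω t) inferInstance] {ω | ω k i = (j, b)} := by
      have h : MeasurableSpace.comap (fun ω : ℕ → Fin N → Fin N × Bool => ω k) inferInstance
          ≤ ⨆ t ∈ ({k} : Set ℕ), MeasurableSpace.comap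
            (fun ω : ℕ → Fin N → Fin N × Bool => ω t) inferInstance :=
        le_iSup₂_of_le k (Set.mem_singleton k) le_rfl
      exact h _ ⟨_, hsing, rfl⟩
    have hmul := (Indep_iff _ _ _).1 hI _ _ hF hE'
    have hset : {ω | θ ((k : ℤ) + 1) ω = j ∧ ν k ω = b ∧ θ (k : ℤ) ω = i} ∩ E
        = {ω | ω k i = (j, b)} ∩ ({ω | θ (k : ℤ) ω = i} ∩ E) := by
      have h1 : ∀ ω, θ (k : ℤ) ω = modeRec i0 ω k := fun ω => by simp [θ]
      have h2 : ∀ ω, θ ((k : ℤ) + 1) ω = (ω k (modeRec i0 ω k)).1 := fun ω => by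
        have : ((k : ℤ) + 1).toNat = k + 1 := by omega
        have h0 : (0 : ℤ) ≤ (k : ℤ) + 1 := by omega
        simp only [θ, h0, if_true, this]
        rfl
      ext ω
      simp only [Set.mem_inter_iff, Set.mem_ofPred_eq, h1, h2, ν, Prod.ext_iff]
      constructor
      · rintro ⟨⟨ha, hb, rfl⟩, hc⟩
        exact ⟨⟨ha, hb⟩, rfl, hc⟩
      · rintro ⟨⟨ha, hb⟩, rfl, hc⟩
        exact ⟨⟨ha, hb, rfl⟩, hc⟩
    have hlaw : μ {ω | ω k i = (j, b)}
        = ENNReal.ofReal (p i j * (if b then νh i else 1 - νh i)) := by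
      rw [← hRs]
      have h1 := (measurePreserving_eval_infinitePi (fun _ : ℕ => Q) k).measure_preimage
        hsing.nullMeasurableSet
      have h2 := (measurePreserving_eval R i).measure_preimage
        (measurableSet_singleton (j, b)).nullMeasurableSet
      exact h1.trans h2
    have hnn : 0 ≤ p i j * (if b then νh i else 1 - νh i) := by
      refine mul_nonneg (hp i j) ?_
      have := hνh i
      split_ifs <;> linarith [this.1, this.2]
    rw [hset, hmul, ENNReal.toReal_mul, hlaw, ENNReal.toReal_ofReal hnn]
  · intro ω
    simp [θ]
  · intro ω
    simp [θ, modeRec]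

theorem exists_isTrajectory {Ω : Type*} {nx nu : ℕ} (A : Matrix (Fin nx) (Fin nx) 𝕜)
    (B : Matrix (Fin nx) (Fin nu) 𝕜) (K : Fin N → Matrix (Fin nu) (Fin nx) 𝕜)
    (θ : ℤ → Ω → Fin N) (ν : ℕ → Ω → Bool) (x0 : Fin nx → 𝕜) :
    ∃ x, IsTrajectory A B K θ ν x x0 :=
  ⟨fun k ω => Nat.rec x0
    (fun k v => clMat A B K (ν k ω) (θ ((k : ℤ) - 1) ω) *ᵥ v) k, fun _ => rfl, fun _ _ => rfl⟩

end Existence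

/-- The noiseless closed-loop MJLS with one time-step delayed mode
observations is mean square stable (for every initial condition `(x₀, θ₀, θ₋₁)`,
`E[x_k] → 0` and `E[x_k x_k^*] → 0`) if and only if `ρ(Λ) < 1`. -/
theorem noiseless_mss_iff_specRad_lt_one
    {𝕜 : Type*} [RCLike 𝕜]
    {N nx nu : ℕ} (hN : 1 ≤ N) (hnx : 1 ≤ nx) (hnu : 1 ≤ nu)
    (A : Matrix (Fin nx) (Fin nx) 𝕜) (B : Matrix (Fin nx) (Fin nu) 𝕜)
    (K : Fin N → Matrix (Fin nu) (Fin nx) 𝕜)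
    (p : Fin N → Fin N → ℝ) (hp_nonneg : ∀ i j, 0 ≤ p i j) (hp_row : ∀ i, ∑ j, p i j = 1)
    (νh : Fin N → ℝ) (hνh : ∀ i, νh i ∈ Set.Icc (0 : ℝ) 1)
    (Λ : Matrix ((Fin N × Fin N) × Fin nx × Fin nx) ((Fin N × Fin N) × Fin nx × Fin nx) 𝕜)
    (hΛ : ∀ S : Fin N → Fin N → Matrix (Fin nx) (Fin nx) 𝕜,
      vec2 (Lop A B K p νh S) = Matrix.mulVec Λ (vec2 S)) :
    (∀ (Ω : Type) [MeasurableSpace Ω] (μ : Measure Ω) [IsProbabilityMeasure μ]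
        (θ : ℤ → Ω → Fin N) (ν : ℕ → Ω → Bool) (x : ℕ → Ω → Fin nx → 𝕜) (x0 : Fin nx → 𝕜),
        (∀ t, Measurable (θ t)) → (∀ t, Measurable (ν t)) →
        (∀ (k : ℕ) (i j : Fin N) (b : Bool) (E : Set Ω),
          MeasurableSet[pastSig θ ν k] E →
          (μ ({ω | θ ((k : ℤ) + 1) ω = j ∧ ν k ω = b ∧ θ (k : ℤ) ω = i} ∩ E)).toReal
            = p i j * (if b then νh i else 1 - νh i) *
                (μ ({ω | θ (k : ℤ) ω = i} ∩ E)).toReal) →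
        (∀ ω, x 0 ω = x0) →
        (∀ (k : ℕ) (ω : Ω),
          x (k + 1) ω
            = Matrix.mulVec
                (A + (if ν k ω then (1 : 𝕜) else 0) • (B * K (θ ((k : ℤ) - 1) ω))) (x k ω)) →
        (∀ r, Tendsto (fun k => ∫ ω, x k ω r ∂μ) atTop (nhds (0 : 𝕜)))
          ∧ (∀ r c, Tendsto (fun k => ∫ ω, x k ω r * star (x k ω c) ∂μ) atTop (nhds (0 : 𝕜))))
      ↔ specRadK Λ < 1 := by
  have : Nonempty (Fin N) := ⟨⟨0, hN⟩⟩
  have : Nonempty (Fin nx) := ⟨⟨0, hnx⟩⟩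
  rw [specRadK_lt_one_iff]
  constructor
  · rintro hmss ⟨⟨i', ℓ'⟩, c', r'⟩ ⟨⟨i, ℓ⟩, c, r⟩
    -- The cross moment at time `0` of the trajectories below is the matrix unit that selects
    -- the chosen column of `Λ ^ k`.
    obtain ⟨Ω, mΩ, μ, hμ, θ, ν, hm, hθ1, hθ0⟩ := exists_modeProcess hp_nonneg hp_row hνh ℓ i
    obtain ⟨x, hx⟩ := exists_isTrajectory A B K θ ν (Pi.single r (1 : 𝕜))
    obtain ⟨y, hy⟩ := exists_isTrajectory A B K θ ν (Pi.single c (1 : 𝕜))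
    have hx2 := tendsto_integral_norm_sq ((hmss Ω μ θ ν x _ hm.meas_mode hm.meas_obs hm.step
      hx.start hx.next).2 r' r')
    have hy2 := tendsto_integral_norm_sq ((hmss Ω μ θ ν y _ hm.meas_mode hm.meas_obs hm.step
      hy.start hy.next).2 c' c')
    have hstart : vec2 (crossMom μ θ x y 0) = Pi.single ((i, ℓ), c, r) (1 : 𝕜) := by
      funext ⟨⟨i₁, ℓ₁⟩, c₁, r₁⟩
      simp only [vec2, crossMom, Matrix.of_apply, hx.start, hy.start, Nat.cast_zero, zero_sub,
        hθ0, hθ1]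
      by_cases hi : i = i₁ ∧ ℓ = ℓ₁
      · obtain ⟨rfl, rfl⟩ := hi
        by_cases hr : r₁ = r <;> by_cases hc : c₁ = c <;>
          simp [hr, hc]
      · have hne : ((i₁, ℓ₁), c₁, r₁) ≠ ((i, ℓ), c, r) := by
          rintro h
          simp only [Prod.mk.injEq] at h
          exact hi ⟨h.1.1.symm, h.1.2.symm⟩
        rw [Pi.single_eq_of_ne hne]
        simp [hi]
    have hcol : ∀ k : ℕ, (Λ ^ k) ((i', ℓ'), c', r') ((i, ℓ), c, r)
        = crossMom μ θ x y k ℓ' i' r' c' := by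
      intro k
      have h := congrFun (vec2_crossMom hm hp_nonneg hνh hΛ hx hy k) ((i', ℓ'), c', r')
      rw [hstart, Matrix.mulVec_single_one] at h
      exact h.symm
    simp only [hcol]
    refine squeeze_zero_norm (fun k => norm_crossMom_le hm hx hy k ℓ' i' r' c') ?_
    simpa using hx2.add hy2
  · intro hΛ0 Ω mΩ μ hμ θ ν x x0 hθ hν hstep hx0 hxs
    have hm : IsModeProcess μ p νh θ ν := ⟨hθ, hν, hstep⟩
    have hx : IsTrajectory A B K θ ν x x0 := ⟨hx0, hxs⟩
    have h2 : ∀ r c, Tendsto (fun k => ∫ ω, x k ω r * star (x k ω c) ∂μ) atTop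
        (nhds (0 : 𝕜)) := by
      intro r c
      simp only [sum_crossMom hm hx hx]
      rw [← Finset.sum_const_zero (s := (Finset.univ : Finset (Fin N × Fin N))) (M := 𝕜)]
      refine tendsto_finsetSum _ fun q _ => ?_
      have hq : ∀ k, crossMom μ θ x x k q.2 q.1 r c
          = ∑ a, (Λ ^ k) (q, c, r) a * vec2 (crossMom μ θ x x 0) a := fun k =>
        congrFun (vec2_crossMom hm hp_nonneg hνh hΛ hx hx k) (q, c, r)
      simp only [hq]
      rw [← Finset.sum_const_zero
        (s := (Finset.univ : Finset ((Fin N × Fin N) × Fin nx × Fin nx))) (M := 𝕜)]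
      refine tendsto_finsetSum _ fun a _ => ?_
      simpa using (hΛ0 (q, c, r) a).mul_const (vec2 (crossMom μ θ x x 0) a)
    refine ⟨fun r => ?_, h2⟩
    exact tendsto_integral_of_sq (fun k => hx.integrable hm k r)
      (fun k => integrable_norm_sq (hx.integrable_mul hm hx k r r))
      (tendsto_integral_norm_sq (h2 r r))
end
end

section
/- For the noisy closed-loop Markov jump linear system with one time-step delayed mode observations, for every k ≥ 0 and all 1 ≤ i, j ≤ N, the first moments still satisfy m_{ij}^{(k+1)} = (A Σ_{ℓ=1}^N m_{ℓi}^{(k)} + ν̂_i B Σ_ℓ K_ℓ m_{ℓi}^{(k)}) p_{ij}, and the second moments satisfy M_{ij}^{(k+1)} = (A (Σ_ℓ M_{ℓi}^{(k)}) A^* + ν̂_i B (Σ_ℓ K_ℓ M_{ℓi}^{(k)} K_ℓ^*) B^* + ν̂_i A (Σ_ℓ M_{ℓi}^{(k)} K_ℓ^*) B^* + ν̂_i B (Σ_ℓ K_ℓ M_{ℓi}^{(k)}) A^*) p_{ij} + Σ_w · (Σ_{ℓ=1}^N π_{ℓi}^{(k)}) p_{ij}. -/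
/-!
The state `x_k` is a function of the mode variables strictly before time `k` (σ-algebra `G₁`) and
of the noise strictly before time `k` (σ-algebra `G₂`). The Markov hypothesis gives
`μ({θ_{k+1} = j, ν_k = b, θ_k = i} ∩ E) = p_{ij} Pr(ν_k = b ∣ θ_k = i) μ({θ_k = i} ∩ E)` only for
`E ∈ G₁`. Independence of the noise from all modes extends it to `E = E₁ ∩ E₂` with `E₁ ∈ G₁`,
`E₂ ∈ G₂`; these sets form a π-system generating `G₁ ⊔ G₂`, so the two sides, as measures of `E`,
agree on `G₁ ⊔ G₂` and integrate every `G₁ ⊔ G₂`-measurable function alike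
(`setIntegral_eq_smul_of_inter`, `setIntegral_mode`).

Splitting `{θ_{k+1} = j, θ_k = i}` according to the value `(b, ℓ)` of `(ν_k, θ_{k-1})` makes the
closed-loop matrix `F_{bℓ} = A + b B K_ℓ` constant on each piece, where the identity above applies
(`setIntegral_step`). Each piece contributes `p_{ij}` times the mixture, with weights `ν̂_i` and
`1 - ν̂_i`, of `F_{bℓ} m_{ℓi}`, respectively `F_{bℓ} M_{ℓi} F_{bℓ}^*`. The current noise `w_k` is
centred and independent of all modes and of the past noise, so it contributes nothing to the first
moment and no cross terms to the second; what remains of it is `Σ_w μ(θ_{k+1} = j, θ_k = i)`, and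
that probability is `p_{ij} Σ_ℓ π_{ℓi}` by the same identity applied to the constant function `1`
(`one_step`). Gaussian noise is square integrable, hence so is `x_k` by induction, which makes every
integral in the argument a genuine one. Expanding `F_{bℓ}` gives the stated matrices
(`sum_closedLoop_mulVec`, `sum_closedLoop_outer`).
-/

open MeasureTheory Matrix ProbabilityTheory Filter
open scoped BigOperators ComplexOrder

noncomputable section

variable {𝕜 : Type*} [RCLike 𝕜]

section Helpers

variable {𝕂 : Type*} [RCLike 𝕂] {Ω : Type*}

/-! ### Integrals of functions of the past -/

/-- If `μ(D ∩ E) = c μ(D' ∩ E)` for all `E = E₁ ∩ E₂` with `E₁ ∈ m₁`, `E₂ ∈ m₂`, then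
`∫_D f = c ∫_{D'} f` for `m₁ ⊔ m₂`-measurable `f`: such `E` form a π-system generating `m₁ ⊔ m₂`.
Integrability of `f` is not needed, since the two measures restricted to `m₁ ⊔ m₂` are equal. -/
lemma setIntegral_eq_smul_of_inter {m₁ m₂ mΩ : MeasurableSpace Ω} {μ : Measure Ω}
    [IsFiniteMeasure μ] (h₁ : m₁ ≤ mΩ) (h₂ : m₂ ≤ mΩ) {D D' : Set Ω} {c : ℝ} (hc : 0 ≤ c)
    (h : ∀ E₁ E₂, MeasurableSet[m₁] E₁ → MeasurableSet[m₂] E₂ →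
      (μ (D ∩ (E₁ ∩ E₂))).toReal = c * (μ (D' ∩ (E₁ ∩ E₂))).toReal)
    {f : Ω → 𝕂} (hf : StronglyMeasurable[m₁ ⊔ m₂] f) :
    ∫ ω in D, f ω ∂μ = (c : 𝕂) * ∫ ω in D', f ω ∂μ := by
  have hle : m₁ ⊔ m₂ ≤ mΩ := sup_le h₁ h₂
  have key : ∀ E₁ E₂, MeasurableSet[m₁] E₁ → MeasurableSet[m₂] E₂ →
      (μ.restrict D) (E₁ ∩ E₂) = (ENNReal.ofReal c • μ.restrict D') (E₁ ∩ E₂) := by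
    intro E₁ E₂ hE₁ hE₂
    have hE : MeasurableSet (E₁ ∩ E₂) := (h₁ _ hE₁).inter (h₂ _ hE₂)
    rw [Measure.smul_apply, Measure.restrict_apply hE, Measure.restrict_apply hE,
      Set.inter_comm _ D, Set.inter_comm _ D', smul_eq_mul]
    rw [← ENNReal.toReal_eq_toReal_iff' (by finiteness) (by finiteness), ENNReal.toReal_mul,
      ENNReal.toReal_ofReal hc]
    exact h E₁ E₂ hE₁ hE₂
  have hgen : m₁ ⊔ m₂ = MeasurableSpace.generateFrom
      (Set.image2 (· ∩ ·) {s | MeasurableSet[m₁] s} {s | MeasurableSet[m₂] s}) := by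
    apply le_antisymm
    · refine sup_le (fun s hs => ?_) (fun s hs => ?_)
      · exact MeasurableSpace.measurableSet_generateFrom
          ⟨s, hs, Set.univ, MeasurableSet.univ, Set.inter_univ s⟩
      · exact MeasurableSpace.measurableSet_generateFrom
          ⟨Set.univ, @MeasurableSet.univ _ m₁, s, hs, Set.univ_inter s⟩
    · refine MeasurableSpace.generateFrom_le ?_
      rintro _ ⟨s, hs, t, ht, rfl⟩
      exact MeasurableSet.inter ((le_sup_left : m₁ ≤ m₁ ⊔ m₂) s hs)
        ((le_sup_right : m₂ ≤ m₁ ⊔ m₂) t ht)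
  have hpi : IsPiSystem
      (Set.image2 (· ∩ ·) {s | MeasurableSet[m₁] s} {s | MeasurableSet[m₂] s}) := by
    rintro _ ⟨s, hs, t, ht, rfl⟩ _ ⟨s', hs', t', ht', rfl⟩ -
    exact ⟨s ∩ s', @MeasurableSet.inter _ m₁ _ _ hs hs', t ∩ t',
      @MeasurableSet.inter _ m₂ _ _ ht ht', Set.inter_inter_inter_comm _ _ _ _⟩
  have huniv := key Set.univ Set.univ (@MeasurableSet.univ _ m₁) (@MeasurableSet.univ _ m₂)
  rw [Set.inter_univ] at huniv
  have htrim : (μ.restrict D).trim hle = (ENNReal.ofReal c • μ.restrict D').trim hle := by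
    refine @Measure.ext _ (m₁ ⊔ m₂) _ _ fun s hs => ?_
    rw [trim_measurableSet_eq hle hs, trim_measurableSet_eq hle hs]
    refine ext_on_measurableSpace_of_generate_finite mΩ _ ?_ hle hgen hpi huniv hs
    rintro _ ⟨s, hs, t, ht, rfl⟩
    exact key s t hs ht
  calc ∫ ω in D, f ω ∂μ = ∫ ω, f ω ∂(ENNReal.ofReal c • μ.restrict D') := by
        rw [integral_trim hle hf, htrim, ← integral_trim hle hf]
    _ = (c : 𝕂) * ∫ ω in D', f ω ∂μ := by
        rw [integral_smul_measure, ENNReal.toReal_ofReal hc, RCLike.real_smul_eq_coe_mul]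

/-- Proportionality of `μ(D ∩ ·)` and `μ(D' ∩ ·)` on `G₁` is enough to compare integrals of
`G₁ ⊔ G₂`-measurable functions, when `D`, `D'` and `G₁` belong to a σ-algebra `S` (the modes)
independent of `G₂` (the past noise). -/
lemma setIntegral_mode {S G₁ G₂ mΩ : MeasurableSpace Ω} {μ : Measure Ω}
    [IsFiniteMeasure μ] (hS : S ≤ mΩ) (hG₁ : G₁ ≤ S) (hG₂ : G₂ ≤ mΩ) (hind : Indep S G₂ μ)
    {D D' : Set Ω} (hD : MeasurableSet[S] D) (hD' : MeasurableSet[S] D') {c : ℝ} (hc : 0 ≤ c)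
    (h : ∀ E, MeasurableSet[G₁] E → (μ (D ∩ E)).toReal = c * (μ (D' ∩ E)).toReal)
    {f : Ω → 𝕂} (hf : StronglyMeasurable[G₁ ⊔ G₂] f) :
    ∫ ω in D, f ω ∂μ = (c : 𝕂) * ∫ ω in D', f ω ∂μ := by
  refine setIntegral_eq_smul_of_inter (hG₁.trans hS) hG₂ hc ?_ hf
  intro E₁ E₂ hE₁ hE₂
  have hI := (Indep_iff _ _ _).1 hind
  rw [← Set.inter_assoc, ← Set.inter_assoc,
    hI _ _ (@MeasurableSet.inter _ S _ _ hD (hG₁ _ hE₁)) hE₂,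
    hI _ _ (@MeasurableSet.inter _ S _ _ hD' (hG₁ _ hE₁)) hE₂, ENNReal.toReal_mul,
    ENNReal.toReal_mul, h E₁ hE₁, mul_assoc]

lemma comp_eq_sum_indicator {α : Type*} [Fintype α] (a : Ω → α) (g : α → Ω → 𝕂) :
    (fun ω => g (a ω) ω) = fun ω => ∑ y, Set.indicator {ω | a ω = y} (g y) ω := by
  classical
  funext ω
  simp [Set.indicator_apply]

lemma stronglyMeasurable_comp_finite {m : MeasurableSpace Ω}
    {α : Type*} [Fintype α] [MeasurableSpace α] [MeasurableSingletonClass α] {a : Ω → α}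
    (ha : Measurable a) {g : α → Ω → 𝕂} (hg : ∀ y, StronglyMeasurable (g y)) :
    StronglyMeasurable (fun ω => g (a ω) ω) := by
  rw [comp_eq_sum_indicator]
  exact Finset.stronglyMeasurable_fun_sum _ fun y _ =>
    (hg y).indicator (ha (measurableSet_singleton y))

lemma memLp_comp_finite {mΩ : MeasurableSpace Ω} {μ : Measure Ω} {p : ENNReal}
    {α : Type*} [Fintype α] [MeasurableSpace α] [MeasurableSingletonClass α] {a : Ω → α}
    (ha : Measurable a) {g : α → Ω → 𝕂} (hg : ∀ y, MemLp (g y) p μ) :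
    MemLp (fun ω => g (a ω) ω) p μ := by
  rw [comp_eq_sum_indicator]
  exact memLp_finsetSum _ fun y _ => (hg y).indicator (ha (measurableSet_singleton y))

lemma setIntegral_comp_finite {mΩ : MeasurableSpace Ω} {μ : Measure Ω} {α : Type*} [Fintype α]
    [MeasurableSpace α] [MeasurableSingletonClass α] {a : Ω → α} (ha : Measurable a)
    {D : Set Ω} {g : α → Ω → 𝕂} (hg : ∀ y, Integrable (g y) μ) :
    ∫ ω in D, g (a ω) ω ∂μ = ∑ y, ∫ ω in D ∩ {ω | a ω = y}, g y ω ∂μ := by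
  have hm : ∀ y, MeasurableSet {ω | a ω = y} := fun y => ha (measurableSet_singleton y)
  rw [comp_eq_sum_indicator,
    integral_finsetSum _ fun y _ => ((hg y).indicator (hm y)).integrableOn]
  exact Finset.sum_congr rfl fun y _ => setIntegral_indicator (hm y)

/-- Integration over a mode transition `i → j` of a function `g (ν_k) (θ_{k-1})` whose branches are
functions of the past. Here `θ', θ₀, θp` stand for `θ_{k+1}, θ_k, θ_{k-1}`, `n` for `ν_k`, `q` for
`p_{ij}` and `v` for `ν̂_i`; `hM` is the Markov property. -/
lemma setIntegral_step {S G₁ G₂ mΩ : MeasurableSpace Ω} {μ : Measure Ω}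
    [IsFiniteMeasure μ] (hS : S ≤ mΩ) (hG₁ : G₁ ≤ S) (hG₂ : G₂ ≤ mΩ) (hind : Indep S G₂ μ)
    {N : ℕ} {θ' θ₀ θp : Ω → Fin N} {n : Ω → Bool} (hθ' : Measurable[S] θ') (hθ₀ : Measurable[S] θ₀)
    (hn : Measurable[S] n) (hθp : Measurable[G₁] θp) {i j : Fin N} {q v : ℝ}
    (hq : 0 ≤ q) (hv : v ∈ Set.Icc (0 : ℝ) 1)
    (hM : ∀ (b : Bool) (E : Set Ω), MeasurableSet[G₁] E →
      (μ ({ω | θ' ω = j ∧ n ω = b ∧ θ₀ ω = i} ∩ E)).toReal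
        = q * (if b then v else 1 - v) * (μ ({ω | θ₀ ω = i} ∩ E)).toReal)
    {g : Bool → Fin N → Ω → 𝕂} (hg : ∀ b ℓ, StronglyMeasurable[G₁ ⊔ G₂] (g b ℓ))
    (hgi : ∀ b ℓ, Integrable (g b ℓ) μ) :
    ∫ ω in {ω | θ' ω = j ∧ θ₀ ω = i}, g (n ω) (θp ω) ω ∂μ
      = (q : 𝕂) * ∑ ℓ, ((v : 𝕂) * ∫ ω in {ω | θ₀ ω = i ∧ θp ω = ℓ}, g true ℓ ω ∂μ
          + (1 - (v : 𝕂)) * ∫ ω in {ω | θ₀ ω = i ∧ θp ω = ℓ}, g false ℓ ω ∂μ) := by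
  have hGm : G₁ ≤ mΩ := hG₁.trans hS
  have hθpm : Measurable[mΩ] θp := fun s hs => hGm _ (hθp hs)
  have hnm : Measurable[mΩ] n := fun s hs => hS _ (hn hs)
  have hDj : MeasurableSet[S] {ω | θ' ω = j} := hθ' (measurableSet_singleton j)
  have hDi : MeasurableSet[S] {ω | θ₀ ω = i} := hθ₀ (measurableSet_singleton i)
  have hDb : ∀ b, MeasurableSet[S] {ω | n ω = b} := fun b => hn (measurableSet_singleton b)
  have hDl : ∀ ℓ, MeasurableSet[G₁] {ω | θp ω = ℓ} := fun ℓ => hθp (measurableSet_singleton ℓ)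
  have hone : ∀ (b : Bool) (ℓ : Fin N),
      ∫ ω in {ω | θ' ω = j ∧ θ₀ ω = i} ∩ {ω | (n ω, θp ω) = (b, ℓ)}, g b ℓ ω ∂μ
        = ((q * (if b then v else 1 - v) : ℝ) : 𝕂)
          * ∫ ω in {ω | θ₀ ω = i ∧ θp ω = ℓ}, g b ℓ ω ∂μ := by
    intro b ℓ
    have e : {ω | θ' ω = j ∧ θ₀ ω = i} ∩ {ω | (n ω, θp ω) = (b, ℓ)}
        = {ω | θ' ω = j ∧ n ω = b ∧ θ₀ ω = i} ∩ {ω | θp ω = ℓ} := by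
      ext ω; simp only [Set.mem_inter_iff, Set.mem_ofPred_eq, Prod.mk.injEq]; tauto
    have hDD : MeasurableSet[S] {ω | θ' ω = j ∧ n ω = b ∧ θ₀ ω = i} :=
      @MeasurableSet.inter _ S _ _ hDj (@MeasurableSet.inter _ S _ _ (hDb b) hDi)
    rw [e]
    refine setIntegral_mode hS hG₁ hG₂ hind (@MeasurableSet.inter _ S _ _ hDD (hG₁ _ (hDl ℓ)))
      (@MeasurableSet.inter _ S _ _ hDi (hG₁ _ (hDl ℓ))) ?_ ?_ (hg b ℓ)
    · refine mul_nonneg hq ?_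
      split_ifs
      · exact hv.1
      · linarith [hv.2]
    · intro E hE
      rw [Set.inter_assoc, hM b _ (@MeasurableSet.inter _ G₁ _ _ (hDl ℓ) hE), ← Set.inter_assoc]
  have hsum := setIntegral_comp_finite (μ := μ) (a := fun ω => (n ω, θp ω)) (hnm.prodMk hθpm)
    (D := {ω | θ' ω = j ∧ θ₀ ω = i}) (g := fun y => g y.1 y.2) (fun y => hgi y.1 y.2)
  rw [hsum, Fintype.sum_prod_type_right, Finset.mul_sum]
  refine Finset.sum_congr rfl fun ℓ _ => ?_
  rw [Fintype.sum_bool, hone, hone]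
  push_cast
  simp only [if_true]
  ring

/-! ### Moments of linear images and square integrability -/

lemma integral_mulVec_apply {mΩ : MeasurableSpace Ω} {ρ : Measure Ω} {a c : ℕ}
    (F : Matrix (Fin a) (Fin c) 𝕂) {x : Ω → Fin c → 𝕂} (hx : ∀ s, Integrable (fun ω => x ω s) ρ)
    (r : Fin a) :
    ∫ ω, (F *ᵥ x ω) r ∂ρ = (F *ᵥ fun s => ∫ ω, x ω s ∂ρ) r := by
  simp only [Matrix.mulVec, dotProduct]
  rw [integral_finsetSum _ fun s _ => (hx s).const_mul _]
  simp only [integral_const_mul]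

lemma memLp_mulVec_apply {mΩ : MeasurableSpace Ω} {ρ : Measure Ω} {a c : ℕ}
    (F : Matrix (Fin a) (Fin c) 𝕂) {x : Ω → Fin c → 𝕂} (hx : ∀ s, MemLp (fun ω => x ω s) 2 ρ)
    (r : Fin a) : MemLp (fun ω => (F *ᵥ x ω) r) 2 ρ := by
  simp only [Matrix.mulVec, dotProduct]
  exact memLp_finsetSum _ fun s _ => (hx s).const_mul _

lemma integrable_mul_star {mΩ : MeasurableSpace Ω} {ρ : Measure Ω} {f g : Ω → 𝕂}
    (hf : MemLp f 2 ρ) (hg : MemLp g 2 ρ) : Integrable (fun ω => f ω * star (g ω)) ρ :=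
  hf.integrable_mul hg.star

lemma integral_mulVec_outer {mΩ : MeasurableSpace Ω} {ρ : Measure Ω} {a c : ℕ}
    (F : Matrix (Fin a) (Fin c) 𝕂) {x : Ω → Fin c → 𝕂} (hx : ∀ s, MemLp (fun ω => x ω s) 2 ρ)
    (r t : Fin a) :
    ∫ ω, (F *ᵥ x ω) r * star ((F *ᵥ x ω) t) ∂ρ
      = (F * (Matrix.of fun s u => ∫ ω, x ω s * star (x ω u) ∂ρ) * Fᴴ) r t := by
  have h1 : ∀ ω, (F *ᵥ x ω) r * star ((F *ᵥ x ω) t)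
      = ∑ u, ∑ s, F r s * star (F t u) * (x ω s * star (x ω u)) := by
    intro ω
    simp only [Matrix.mulVec, dotProduct, star_sum, star_mul', Finset.sum_mul_sum]
    rw [Finset.sum_comm]
    refine Finset.sum_congr rfl fun u _ => Finset.sum_congr rfl fun s _ => by ring
  simp_rw [h1]
  rw [integral_finsetSum _ fun u _ => integrable_finsetSum _ fun s _ =>
    (integrable_mul_star (hx s) (hx u)).const_mul _]
  simp only [Matrix.mul_apply, Finset.sum_mul, Matrix.of_apply, Matrix.conjTranspose_apply]
  refine Finset.sum_congr rfl fun u _ => ?_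
  rw [integral_finsetSum _ fun s _ => (integrable_mul_star (hx s) (hx u)).const_mul _]
  refine Finset.sum_congr rfl fun s _ => ?_
  rw [integral_const_mul]
  ring

/-- Real and imaginary parts of a coordinate are real-linear functionals, so their laws are
one-dimensional Gaussians, which have finite second moment. -/
lemma memLp_coord_of_isGaussianLaw {mΩ : MeasurableSpace Ω} {μ : Measure Ω}
    [MeasurableSpace 𝕂] [BorelSpace 𝕂] {n : ℕ} {w : Ω → Fin n → 𝕂} (hw : Measurable w)
    (hG : IsGaussianLaw (μ.map w)) (r : Fin n) : MemLp (fun ω => w ω r) 2 μ := by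
  have main : ∀ L : (Fin n → 𝕂) →ₗ[ℝ] ℝ, Measurable L → MemLp (fun ω => L (w ω)) 2 μ := by
    intro L hL
    obtain ⟨m, v, hmv⟩ := hG L
    rw [Measure.map_map hL hw] at hmv
    have := memLp_id_gaussianReal' (μ := m) (v := v) 2 (by norm_num)
    rw [← hmv, memLp_map_measure_iff aestronglyMeasurable_id (hL.comp hw).aemeasurable] at this
    exact this
  rw [← memLp_re_im_iff]
  constructor
  · exact main (RCLike.reLm.comp (LinearMap.proj r : (Fin n → 𝕂) →ₗ[ℝ] 𝕂))
      (RCLike.continuous_re.measurable.comp (measurable_pi_apply r))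
  · exact main (RCLike.imLm.comp (LinearMap.proj r : (Fin n → 𝕂) →ₗ[ℝ] 𝕂))
      (RCLike.continuous_im.measurable.comp (measurable_pi_apply r))

/-! ### Independence of the current noise -/

/-- Factorisation of expectations, `E[f g 1_D] = E[f 1_D] E[g]`, for `D ∈ H` and independent `H`,
`W`. It holds without integrability: for independent factors Bochner's convention for
non-integrable functions is multiplicative. -/
lemma setIntegral_mul_of_indep {H W mΩ : MeasurableSpace Ω} {μ : Measure Ω}
    (hH : H ≤ mΩ) (hW : W ≤ mΩ) (hind : Indep H W μ) {f g : Ω → 𝕂} (hf : StronglyMeasurable[H] f)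
    (hg : StronglyMeasurable[W] g) {D : Set Ω} (hD : MeasurableSet[H] D) :
    ∫ ω in D, f ω * g ω ∂μ = (∫ ω in D, f ω ∂μ) * ∫ ω, g ω ∂μ := by
  have hfD : StronglyMeasurable[H] (D.indicator f) := hf.indicator hD
  have hI : IndepFun (D.indicator f) g μ := by
    rw [IndepFun_iff_Indep]
    exact indep_of_indep_of_le hind hfD.measurable.comap_le hg.measurable.comap_le
  have hmul : (fun ω => D.indicator (fun ω => f ω * g ω) ω)
      = fun ω => D.indicator f ω * g ω := by
    funext ω
    by_cases h : ω ∈ D <;> simp [h]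
  rw [← integral_indicator (hH _ hD), hmul, ← integral_indicator (hH _ hD)]
  exact hI.integral_fun_mul_eq_mul_integral
    (hfD.mono hH).aestronglyMeasurable (hg.mono hW).aestronglyMeasurable

/-- From joint independence of the mode σ-algebra `S` and all the noise σ-algebras `G t`: the modes
are independent of the past noise, and the modes together with the past noise are independent of
the current noise. -/
lemma indep_pastNoise {S mΩ : MeasurableSpace Ω} {G : ℕ → MeasurableSpace Ω} {μ : Measure Ω}
    (hS : S ≤ mΩ) (hG : ∀ t, G t ≤ mΩ)
    (h : iIndep (fun o : Option ℕ => Option.elim o S G) μ) (k : ℕ) :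
    Indep S (⨆ t : ℕ, ⨆ (_ : t < k), G t) μ ∧
      Indep (S ⊔ ⨆ t : ℕ, ⨆ (_ : t < k), G t) (G k) μ := by
  have hle : ∀ o : Option ℕ, Option.elim o S G ≤ mΩ := by
    rintro (_ | t)
    · exact hS
    · exact hG t
  constructor
  · have := indep_iSup_of_disjoint hle h (S := {none}) (T := {o | ∃ t < k, o = some t})
      (by rw [Set.disjoint_left]; rintro _ rfl ⟨t, -, ht⟩; cases ht)
    refine indep_of_indep_of_le this ?_ ?_
    · exact le_iSup₂_of_le none rfl le_rfl
    · exact iSup₂_le fun t ht => le_iSup₂_of_le (some t) ⟨t, ht, rfl⟩ le_rfl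
  · have := indep_iSup_of_disjoint hle h (S := {o | ∀ t, o = some t → t < k}) (T := {some k})
      (by rw [Set.disjoint_right]; rintro _ rfl h; exact lt_irrefl _ (h k rfl))
    refine indep_of_indep_of_le this (sup_le ?_ ?_) ?_
    · exact le_iSup₂_of_le none (fun t ht => by cases ht) le_rfl
    · exact iSup₂_le fun t ht =>
        le_iSup₂_of_le (some t) (fun s hs => by cases hs; exact ht) le_rfl
    · exact le_iSup₂_of_le (some k) rfl le_rfl

/-! ### The closed-loop matrix and one step of the recursion -/

/-- The closed-loop matrix `A + b B K_ℓ` in effect when `ν_k = b` and `θ_{k-1} = ℓ`. -/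
def closedLoop {N nx nu : ℕ} (A : Matrix (Fin nx) (Fin nx) 𝕂) (B : Matrix (Fin nx) (Fin nu) 𝕂)
    (K : Fin N → Matrix (Fin nu) (Fin nx) 𝕂) (b : Bool) (ℓ : Fin N) :
    Matrix (Fin nx) (Fin nx) 𝕂 :=
  A + (if b then (1 : 𝕂) else 0) • (B * K ℓ)

lemma sum_closedLoop_mulVec {N nx nu : ℕ} (A : Matrix (Fin nx) (Fin nx) 𝕂)
    (B : Matrix (Fin nx) (Fin nu) 𝕂) (K : Fin N → Matrix (Fin nu) (Fin nx) 𝕂)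
    (m : Fin N → Fin nx → 𝕂) (v : 𝕂) :
    ∑ ℓ, (v • (closedLoop A B K true ℓ *ᵥ m ℓ) + (1 - v) • (closedLoop A B K false ℓ *ᵥ m ℓ))
      = A *ᵥ (∑ ℓ, m ℓ) + v • (B *ᵥ ∑ ℓ, K ℓ *ᵥ m ℓ) := by
  rw [Matrix.mulVec_sum, Matrix.mulVec_sum, Finset.smul_sum, ← Finset.sum_add_distrib]
  refine Finset.sum_congr rfl fun ℓ _ => ?_
  simp only [closedLoop, if_true, Bool.false_eq_true, if_false, one_smul, zero_smul, add_zero,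
    Matrix.add_mulVec, Matrix.mulVec_mulVec]
  module

lemma sum_closedLoop_outer {N nx nu : ℕ} (A : Matrix (Fin nx) (Fin nx) 𝕂)
    (B : Matrix (Fin nx) (Fin nu) 𝕂) (K : Fin N → Matrix (Fin nu) (Fin nx) 𝕂)
    (M : Fin N → Matrix (Fin nx) (Fin nx) 𝕂) (v : 𝕂) :
    ∑ ℓ, (v • (closedLoop A B K true ℓ * M ℓ * (closedLoop A B K true ℓ)ᴴ)
        + (1 - v) • (closedLoop A B K false ℓ * M ℓ * (closedLoop A B K false ℓ)ᴴ))
      = A * (∑ ℓ, M ℓ) * Aᴴ + v • (B * (∑ ℓ, K ℓ * M ℓ * (K ℓ)ᴴ) * Bᴴ)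
        + v • (A * (∑ ℓ, M ℓ * (K ℓ)ᴴ) * Bᴴ) + v • (B * (∑ ℓ, K ℓ * M ℓ) * Aᴴ) := by
  simp only [Matrix.mul_sum, Matrix.sum_mul, Finset.smul_sum, ← Finset.sum_add_distrib]
  refine Finset.sum_congr rfl fun ℓ _ => ?_
  simp only [closedLoop, if_true, Bool.false_eq_true, if_false, one_smul, zero_smul, add_zero,
    Matrix.conjTranspose_add, Matrix.conjTranspose_mul, Matrix.add_mul, Matrix.mul_add,
    Matrix.mul_assoc]
  module

lemma stronglyMeasurable_mulVec_apply {m : MeasurableSpace Ω} {a c : ℕ}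
    (F : Matrix (Fin a) (Fin c) 𝕂) {x : Ω → Fin c → 𝕂}
    (hx : ∀ s, StronglyMeasurable fun ω => x ω s) (r : Fin a) :
    StronglyMeasurable fun ω => (F *ᵥ x ω) r := by
  simp only [Matrix.mulVec, dotProduct]
  exact Finset.stronglyMeasurable_fun_sum _ fun s _ => (hx s).const_mul _

/-- First and second moments of `F x + w` on a mode transition `i → j`, where `F` is the random
closed-loop matrix. As before, `θ', θ₀, θp` stand for `θ_{k+1}, θ_k, θ_{k-1}`, `n` for `ν_k`, `q`
for `p_{ij}` and `v` for `ν̂_i`; `S` is generated by all modes, `G₁` by the past modes, `G₂` by the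
past noise and `W` by the current noise. The second moment is still written as a mixture over
`ν_k`; `sum_closedLoop_outer` expands it. -/
lemma one_step {S G₁ G₂ W mΩ : MeasurableSpace Ω} {μ : Measure Ω} [IsProbabilityMeasure μ]
    (hS : S ≤ mΩ) (hG₁ : G₁ ≤ S) (hG₂ : G₂ ≤ mΩ) (hW : W ≤ mΩ) (hind : Indep S G₂ μ)
    (hindW : Indep (S ⊔ G₂) W μ) {N nx nu : ℕ}
    (A : Matrix (Fin nx) (Fin nx) 𝕂) (B : Matrix (Fin nx) (Fin nu) 𝕂)
    (K : Fin N → Matrix (Fin nu) (Fin nx) 𝕂)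
    {θ' θ₀ θp : Ω → Fin N} {n : Ω → Bool} (hθ' : Measurable[S] θ') (hθ₀ : Measurable[S] θ₀)
    (hn : Measurable[S] n) (hθp : Measurable[G₁] θp) {i j : Fin N} {q v : ℝ}
    (hq : 0 ≤ q) (hv : v ∈ Set.Icc (0 : ℝ) 1)
    (hM : ∀ (b : Bool) (E : Set Ω), MeasurableSet[G₁] E →
      (μ ({ω | θ' ω = j ∧ n ω = b ∧ θ₀ ω = i} ∩ E)).toReal
        = q * (if b then v else 1 - v) * (μ ({ω | θ₀ ω = i} ∩ E)).toReal)
    {x w : Ω → Fin nx → 𝕂} (hx : ∀ r, StronglyMeasurable[G₁ ⊔ G₂] fun ω => x ω r)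
    (hx2 : ∀ r, MemLp (fun ω => x ω r) 2 μ) (hw : ∀ r, StronglyMeasurable[W] fun ω => w ω r)
    (hw2 : ∀ r, MemLp (fun ω => w ω r) 2 μ) (hw0 : ∀ r, ∫ ω, w ω r ∂μ = 0) :
    (fun r => ∫ ω in {ω | θ' ω = j ∧ θ₀ ω = i},
        (closedLoop A B K (n ω) (θp ω) *ᵥ x ω + w ω) r ∂μ)
      = (q : 𝕂) • (A *ᵥ (∑ ℓ, fun r => ∫ ω in {ω | θ₀ ω = i ∧ θp ω = ℓ}, x ω r ∂μ)
        + (v : 𝕂) • (B *ᵥ ∑ ℓ, K ℓ *ᵥ fun r => ∫ ω in {ω | θ₀ ω = i ∧ θp ω = ℓ}, x ω r ∂μ))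
    ∧ ∀ r c, ∫ ω in {ω | θ' ω = j ∧ θ₀ ω = i},
        (closedLoop A B K (n ω) (θp ω) *ᵥ x ω + w ω) r
          * star ((closedLoop A B K (n ω) (θp ω) *ᵥ x ω + w ω) c) ∂μ
      = ((q : 𝕂) • ∑ ℓ, ((v : 𝕂) • (closedLoop A B K true ℓ
              * (Matrix.of fun s u => ∫ ω in {ω | θ₀ ω = i ∧ θp ω = ℓ}, x ω s * star (x ω u) ∂μ)
              * (closedLoop A B K true ℓ)ᴴ)
          + (1 - (v : 𝕂)) • (closedLoop A B K false ℓ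
              * (Matrix.of fun s u => ∫ ω in {ω | θ₀ ω = i ∧ θp ω = ℓ}, x ω s * star (x ω u) ∂μ)
              * (closedLoop A B K false ℓ)ᴴ))) r c
        + ((∑ ℓ, (μ {ω | θ₀ ω = i ∧ θp ω = ℓ}).toReal) * q : ℝ) * ∫ ω, w ω r * star (w ω c) ∂μ := by
  have hGm : G₁ ≤ mΩ := hG₁.trans hS
  have hH : S ⊔ G₂ ≤ mΩ := sup_le hS hG₂
  have hGH : G₁ ⊔ G₂ ≤ S ⊔ G₂ := sup_le_sup_right hG₁ _
  have hθpS : Measurable[S] θp := fun s hs => hG₁ _ (hθp hs)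
  have hp : Measurable[S] fun ω => (n ω, θp ω) := hn.prodMk hθpS
  set D : Set Ω := {ω | θ' ω = j ∧ θ₀ ω = i} with hDdef
  have hD : MeasurableSet[S ⊔ G₂] D := (le_sup_left : S ≤ S ⊔ G₂) _
    (@MeasurableSet.inter _ S _ _ (hθ' (measurableSet_singleton j))
      (hθ₀ (measurableSet_singleton i)))
  have hgm : ∀ b ℓ r, StronglyMeasurable[G₁ ⊔ G₂] fun ω => (closedLoop A B K b ℓ *ᵥ x ω) r :=
    fun b ℓ r => stronglyMeasurable_mulVec_apply _ hx r
  have hg2 : ∀ b ℓ r, MemLp (fun ω => (closedLoop A B K b ℓ *ᵥ x ω) r) 2 μ :=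
    fun b ℓ r => memLp_mulVec_apply _ hx2 r
  have hy : ∀ r, StronglyMeasurable[S ⊔ G₂]
      fun ω => (closedLoop A B K (n ω) (θp ω) *ᵥ x ω) r := fun r =>
    @stronglyMeasurable_comp_finite 𝕂 _ Ω (S ⊔ G₂) _ _ _ _ (fun ω => (n ω, θp ω))
      (Measurable.mono hp le_sup_left le_rfl)
      (fun y ω => (closedLoop A B K y.1 y.2 *ᵥ x ω) r) (fun y => (hgm y.1 y.2 r).mono hGH)
  have hy2 : ∀ r, MemLp (fun ω => (closedLoop A B K (n ω) (θp ω) *ᵥ x ω) r) 2 μ := fun r =>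
    memLp_comp_finite (a := fun ω => (n ω, θp ω)) (Measurable.mono hp hS le_rfl)
      (g := fun y ω => (closedLoop A B K y.1 y.2 *ᵥ x ω) r) (fun y => hg2 y.1 y.2 r)
  have hone : StronglyMeasurable[S ⊔ G₂] fun _ : Ω => (1 : 𝕂) :=
    @stronglyMeasurable_const _ _ (S ⊔ G₂) _ _
  have hstar : ∀ {m : MeasurableSpace Ω} {f : Ω → 𝕂}, StronglyMeasurable[m] f →
      StronglyMeasurable[m] fun ω => star (f ω) := fun hf =>
    continuous_star.comp_stronglyMeasurable hf
  constructor
  · rw [← sum_closedLoop_mulVec]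
    funext r
    -- The factor `1` turns independence of `w` from the event `D` into a product of integrals.
    have hwD : ∫ ω in D, w ω r ∂μ = 0 := by
      have := setIntegral_mul_of_indep hH hW hindW hone (hw r) hD
      simpa [hw0 r] using this
    simp only [Pi.add_apply]
    rw [integral_add ((hy2 r).integrable (by norm_num)).integrableOn
      ((hw2 r).integrable (by norm_num)).integrableOn, hwD, add_zero,
      setIntegral_step hS hG₁ hG₂ hind hθ' hθ₀ hn hθp hq hv hM
        (g := fun b ℓ ω => (closedLoop A B K b ℓ *ᵥ x ω) r) (fun b ℓ => hgm b ℓ r)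
        (fun b ℓ => (hg2 b ℓ r).integrable (by norm_num))]
    simp only [Pi.smul_apply, Finset.sum_apply, Pi.add_apply, smul_eq_mul]
    congr 1
    refine Finset.sum_congr rfl fun ℓ _ => ?_
    rw [integral_mulVec_apply _ fun s => ((hx2 s).integrable (by norm_num)).integrableOn,
      integral_mulVec_apply _ fun s => ((hx2 s).integrable (by norm_num)).integrableOn]
  · intro r c
    have hyw : ∫ ω in D, (closedLoop A B K (n ω) (θp ω) *ᵥ x ω) r * star (w ω c) ∂μ = 0 := by
      rw [setIntegral_mul_of_indep hH hW hindW (hy r) (hstar (hw c)) hD]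
      have : ∫ ω, star (w ω c) ∂μ = star (∫ ω, w ω c ∂μ) := integral_conj
      rw [this, hw0, star_zero, mul_zero]
    have hwy : ∫ ω in D, w ω r * star ((closedLoop A B K (n ω) (θp ω) *ᵥ x ω) c) ∂μ = 0 := by
      simp_rw [mul_comm (w _ r)]
      rw [setIntegral_mul_of_indep hH hW hindW (hstar (hy c)) (hw r) hD, hw0, mul_zero]
    -- The transition probability is the same identity applied to the constant function `1`.
    have hμD : (μ D).toReal = (∑ ℓ, (μ {ω | θ₀ ω = i ∧ θp ω = ℓ}).toReal) * q := by
      have hst := setIntegral_step (𝕂 := ℝ) hS hG₁ hG₂ hind hθ' hθ₀ hn hθp hq hv hM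
        (g := fun _ _ _ => (1 : ℝ)) (fun _ _ => @stronglyMeasurable_const _ _ (G₁ ⊔ G₂) _ _)
        (fun _ _ => integrable_const _)
      simp only [integral_const, MeasurableSet.univ, measureReal_restrict_apply, Set.univ_inter,
        smul_eq_mul, mul_one, RCLike.ofReal_real_eq_id, id] at hst
      rw [← measureReal_def, hst, mul_comm]
      congr 1
      exact Finset.sum_congr rfl fun ℓ _ => by rw [← measureReal_def]; ring
    have hww : ∫ ω in D, w ω r * star (w ω c) ∂μ
        = ((μ D).toReal : 𝕂) * ∫ ω, w ω r * star (w ω c) ∂μ := by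
      have := setIntegral_mul_of_indep hH hW hindW hone
        ((hw r).mul (hstar (hw c))) hD
      simpa [measureReal_def, RCLike.real_smul_eq_coe_mul] using this
    have hyy : ∫ ω in D, (closedLoop A B K (n ω) (θp ω) *ᵥ x ω) r
        * star ((closedLoop A B K (n ω) (θp ω) *ᵥ x ω) c) ∂μ = _ :=
      setIntegral_step hS hG₁ hG₂ hind hθ' hθ₀ hn hθp hq hv hM
        (g := fun b ℓ ω => (closedLoop A B K b ℓ *ᵥ x ω) r * star ((closedLoop A B K b ℓ *ᵥ x ω) c))
        (fun b ℓ => (hgm b ℓ r).mul (hstar (hgm b ℓ c)))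
        (fun b ℓ => integrable_mul_star (hg2 b ℓ r) (hg2 b ℓ c))
    have hexp : ∀ ω, (closedLoop A B K (n ω) (θp ω) *ᵥ x ω + w ω) r
          * star ((closedLoop A B K (n ω) (θp ω) *ᵥ x ω + w ω) c)
        = ((closedLoop A B K (n ω) (θp ω) *ᵥ x ω) r
            * star ((closedLoop A B K (n ω) (θp ω) *ᵥ x ω) c)
          + (closedLoop A B K (n ω) (θp ω) *ᵥ x ω) r * star (w ω c))
          + (w ω r * star ((closedLoop A B K (n ω) (θp ω) *ᵥ x ω) c) + w ω r * star (w ω c)) := by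
      intro ω
      simp only [Pi.add_apply, star_add]
      ring
    simp_rw [hexp]
    have i1 := (integrable_mul_star (hy2 r) (hy2 c)).integrableOn (s := D)
    have i2 := (integrable_mul_star (hy2 r) (hw2 c)).integrableOn (s := D)
    have i3 := (integrable_mul_star (hw2 r) (hy2 c)).integrableOn (s := D)
    have i4 := (integrable_mul_star (hw2 r) (hw2 c)).integrableOn (s := D)
    have i12 : IntegrableOn (fun ω => (closedLoop A B K (n ω) (θp ω) *ᵥ x ω) r
          * star ((closedLoop A B K (n ω) (θp ω) *ᵥ x ω) c)
        + (closedLoop A B K (n ω) (θp ω) *ᵥ x ω) r * star (w ω c)) D μ := i1.add i2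
    have i34 : IntegrableOn (fun ω => w ω r * star ((closedLoop A B K (n ω) (θp ω) *ᵥ x ω) c)
        + w ω r * star (w ω c)) D μ := i3.add i4
    rw [integral_add i12 i34, integral_add i1 i2, integral_add i3 i4, hyw, hwy,
      hww, hyy, hμD, add_zero, zero_add]
    congr 1
    simp only [Matrix.smul_apply, Matrix.sum_apply, Matrix.add_apply, smul_eq_mul]
    congr 1
    refine Finset.sum_congr rfl fun ℓ _ => ?_
    rw [integral_mulVec_outer _ fun s => (hx2 s).restrict _,
      integral_mulVec_outer _ fun s => (hx2 s).restrict _]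

/-- The σ-algebra generated by all the modes `θ_t` and all the `ν_t`, past and future. -/
def modeSig {N : ℕ} (θ : ℤ → Ω → Fin N) (ν : ℕ → Ω → Bool) : MeasurableSpace Ω :=
  (⨆ t : ℤ, MeasurableSpace.comap (θ t) ⊤) ⊔ ⨆ t : ℕ, MeasurableSpace.comap (ν t) ⊤

/-- The σ-algebra generated by `w_0, …, w_{k-1}`. -/
def pastNoise [MeasurableSpace 𝕂] {n : ℕ} (w : ℕ → Ω → Fin n → 𝕂) (k : ℕ) : MeasurableSpace Ω :=
  ⨆ t : ℕ, ⨆ (_ : t < k), MeasurableSpace.comap (w t) inferInstance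

end Helpers

/-- Moment recursions for the noisy closed-loop MJLS with one time-step
delayed mode observations: the first moments satisfy the same recursion as in the noiseless
case, and the second moments pick up the extra term `Σ_w (Σ_ℓ π_{ℓi}^{(k)}) p_{ij}`. -/
theorem noisy_moment_recursions
    {𝕜 : Type*} [RCLike 𝕜]
    {N nx nu : ℕ} (hN : 1 ≤ N) (hnx : 1 ≤ nx) (hnu : 1 ≤ nu)
    (A : Matrix (Fin nx) (Fin nx) 𝕜) (B : Matrix (Fin nx) (Fin nu) 𝕜)
    (K : Fin N → Matrix (Fin nu) (Fin nx) 𝕜)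
    (p : Fin N → Fin N → ℝ) (hp_nonneg : ∀ i j, 0 ≤ p i j) (hp_row : ∀ i, ∑ j, p i j = 1)
    (νh : Fin N → ℝ) (hνh : ∀ i, νh i ∈ Set.Icc (0 : ℝ) 1)
    [MeasurableSpace 𝕜] [BorelSpace 𝕜]
    {Ω : Type*} [MeasurableSpace Ω] (μ : Measure Ω) [IsProbabilityMeasure μ]
    (θ : ℤ → Ω → Fin N) (hθ : ∀ t, Measurable (θ t))
    (ν : ℕ → Ω → Bool) (hν : ∀ t, Measurable (ν t))
    (hMarkov : ∀ (k : ℕ) (i j : Fin N) (b : Bool) (E : Set Ω),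
      MeasurableSet[pastSig θ ν k] E →
      (μ ({ω | θ ((k : ℤ) + 1) ω = j ∧ ν k ω = b ∧ θ (k : ℤ) ω = i} ∩ E)).toReal
        = p i j * (if b then νh i else 1 - νh i) *
            (μ ({ω | θ (k : ℤ) ω = i} ∩ E)).toReal)
    (Sw : Matrix (Fin nx) (Fin nx) 𝕜)
    (w : ℕ → Ω → Fin nx → 𝕜) (hw : ∀ t, Measurable (w t))
    (hwGauss : ∀ t, IsGaussianLaw (μ.map (w t)))
    (hwMean : ∀ t r, ∫ ω, w t ω r ∂μ = 0)
    (hwCov : ∀ t, (Matrix.of fun r c => ∫ ω, w t ω r * star (w t ω c) ∂μ) = Sw)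
    (hwIdent : ∀ t, ProbabilityTheory.IdentDistrib (w t) (w 0) μ μ)
    (hwIndep : ProbabilityTheory.iIndep
      (fun o : Option ℕ =>
        Option.elim o
          ((⨆ t : ℤ, MeasurableSpace.comap (θ t) ⊤) ⊔
            ⨆ t : ℕ, MeasurableSpace.comap (ν t) ⊤)
          (fun t => MeasurableSpace.comap (w t) inferInstance)) μ)
    (x0 : Fin nx → 𝕜) (x : ℕ → Ω → Fin nx → 𝕜)
    (hx0 : ∀ ω, x 0 ω = x0)
    (hxrec : ∀ (k : ℕ) (ω : Ω),
      x (k + 1) ω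
        = Matrix.mulVec (A + (if ν k ω then (1 : 𝕜) else 0) • (B * K (θ ((k : ℤ) - 1) ω)))
            (x k ω) + w k ω)
 :
    (∀ (k : ℕ) (i j : Fin N),
      mMom μ θ x (k + 1) i j
        = ((p i j : ℝ) : 𝕜) •
            (Matrix.mulVec A (∑ ℓ, mMom μ θ x k ℓ i)
              + ((νh i : ℝ) : 𝕜) •
                  Matrix.mulVec B (∑ ℓ, Matrix.mulVec (K ℓ) (mMom μ θ x k ℓ i))))
    ∧ (∀ (k : ℕ) (i j : Fin N),
      MMom μ θ x (k + 1) i j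
        = ((p i j : ℝ) : 𝕜) •
            (A * (∑ ℓ, MMom μ θ x k ℓ i) * Aᴴ
              + ((νh i : ℝ) : 𝕜) • (B * (∑ ℓ, K ℓ * MMom μ θ x k ℓ i * (K ℓ)ᴴ) * Bᴴ)
              + ((νh i : ℝ) : 𝕜) • (A * (∑ ℓ, MMom μ θ x k ℓ i * (K ℓ)ᴴ) * Bᴴ)
              + ((νh i : ℝ) : 𝕜) • (B * (∑ ℓ, K ℓ * MMom μ θ x k ℓ i) * Aᴴ))
          + (((∑ ℓ, piP μ θ k ℓ i) * p i j : ℝ) : 𝕜) • Sw) := by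
  have hS : modeSig θ ν ≤ _ :=
    sup_le (iSup_le fun t => (hθ t).comap_le) (iSup_le fun t => (hν t).comap_le)
  have hG : ∀ t, MeasurableSpace.comap (w t) inferInstance ≤ _ := fun t => (hw t).comap_le
  have hG₂ : ∀ k, pastNoise w k ≤ _ := fun k => iSup₂_le fun t _ => hG t
  have hG₁ : ∀ k, pastSig θ ν k ≤ modeSig θ ν := fun k => sup_le_sup
    (iSup_le fun t => iSup_le fun _ => iSup_le fun _ =>
      le_iSup (fun t => MeasurableSpace.comap (θ t) ⊤) t)
    (iSup_le fun t => iSup_le fun _ => le_iSup (fun t => MeasurableSpace.comap (ν t) ⊤) t)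
  have hG₁mono : ∀ k, pastSig θ ν k ≤ pastSig θ ν (k + 1) := fun k => sup_le_sup
    (iSup_mono fun t => iSup_mono fun _ => iSup_mono' fun h => ⟨by push_cast; omega, le_rfl⟩)
    (iSup_mono fun t => iSup_mono' fun h => ⟨by omega, le_rfl⟩)
  have hG₂mono : ∀ k, pastNoise w k ≤ pastNoise w (k + 1) := fun k =>
    iSup_mono fun t => iSup_mono' fun h => ⟨by omega, le_rfl⟩
  have hθS : ∀ t, Measurable[modeSig θ ν] (θ t) := fun t => measurable_iff_comap_le.2
    (le_sup_of_le_left (le_iSup (fun t => MeasurableSpace.comap (θ t) ⊤) t))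
  have hνS : ∀ t, Measurable[modeSig θ ν] (ν t) := fun t => measurable_iff_comap_le.2
    (le_sup_of_le_right (le_iSup (fun t => MeasurableSpace.comap (ν t) ⊤) t))
  have hθp : ∀ k : ℕ, Measurable[pastSig θ ν k] (θ ((k : ℤ) - 1)) := fun k =>
    measurable_iff_comap_le.2 (le_sup_of_le_left
      (le_iSup_of_le ((k : ℤ) - 1) (le_iSup_of_le (by omega) (le_iSup_of_le (by omega) le_rfl))))
  have hνp : ∀ k : ℕ, Measurable[pastSig θ ν (k + 1)] (ν k) := fun k =>
    measurable_iff_comap_le.2 (le_sup_of_le_right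
      (le_iSup_of_le k (le_iSup_of_le (by omega) le_rfl)))
  have hwG : ∀ t r, StronglyMeasurable[MeasurableSpace.comap (w t) inferInstance]
      fun ω => w t ω r := fun t r =>
    Measurable.stronglyMeasurable
      ((measurable_pi_apply r).comp (measurable_iff_comap_le.2 le_rfl))
  have hw2 : ∀ t r, MemLp (fun ω => w t ω r) 2 μ := fun t r =>
    memLp_coord_of_isGaussianLaw (hw t) (hwGauss t) r
  have hrec : ∀ k ω, x (k + 1) ω
      = closedLoop A B K (ν k ω) (θ ((k : ℤ) - 1) ω) *ᵥ x k ω + w k ω := hxrec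
  -- `x_{k+1}` involves `ν_k`, `θ_{k-1}` and `w_k`, all of which are in the past of time `k + 1`.
  have hx : ∀ k r, StronglyMeasurable[pastSig θ ν k ⊔ pastNoise w k] fun ω => x k ω r := by
    intro k
    induction k with
    | zero => intro r; simp only [hx0]; exact @stronglyMeasurable_const _ _ _ _ _
    | succ k ih =>
      intro r
      have hmono : pastSig θ ν k ⊔ pastNoise w k ≤ pastSig θ ν (k + 1) ⊔ pastNoise w (k + 1) :=
        sup_le_sup (hG₁mono k) (hG₂mono k)
      have hνk : Measurable[pastSig θ ν (k + 1) ⊔ pastNoise w (k + 1)] (ν k) := fun s hs =>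
        (le_sup_left : pastSig θ ν (k + 1) ≤ _) _ (hνp k hs)
      have hθk : Measurable[pastSig θ ν (k + 1) ⊔ pastNoise w (k + 1)] (θ ((k : ℤ) - 1)) :=
        fun s hs => (le_sup_left : pastSig θ ν (k + 1) ≤ _) _ (hG₁mono k _ (hθp k hs))
      simp only [hrec, Pi.add_apply]
      have h1 : StronglyMeasurable[pastSig θ ν (k + 1) ⊔ pastNoise w (k + 1)]
          fun ω => (closedLoop A B K (ν k ω) (θ ((k : ℤ) - 1) ω) *ᵥ x k ω) r :=
        @stronglyMeasurable_comp_finite 𝕜 _ Ω (pastSig θ ν (k + 1) ⊔ pastNoise w (k + 1)) _ _ _ _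
          (fun ω => (ν k ω, θ ((k : ℤ) - 1) ω)) (hνk.prodMk hθk)
          (fun y ω => (closedLoop A B K y.1 y.2 *ᵥ x k ω) r)
          (fun y => (stronglyMeasurable_mulVec_apply _ ih r).mono hmono)
      have h2 : StronglyMeasurable[pastSig θ ν (k + 1) ⊔ pastNoise w (k + 1)] fun ω => w k ω r :=
        (hwG k r).mono (le_sup_of_le_right (le_iSup₂_of_le k (Nat.lt_succ_self k) le_rfl))
      exact h1.add h2
  have hx2 : ∀ k r, MemLp (fun ω => x k ω r) 2 μ := by
    intro k
    induction k with
    | zero => intro r; simp only [hx0]; exact memLp_const _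
    | succ k ih =>
      intro r
      simp only [hrec, Pi.add_apply]
      exact (memLp_comp_finite (a := fun ω => (ν k ω, θ ((k : ℤ) - 1) ω))
        ((hν k).prodMk (hθ _)) (g := fun y ω => (closedLoop A B K y.1 y.2 *ᵥ x k ω) r)
        (fun y => memLp_mulVec_apply _ ih r)).add (hw2 k r)
  have step := fun (k : ℕ) (i j : Fin N) =>
    one_step hS (hG₁ k) (hG₂ k) (hG k) (indep_pastNoise hS hG hwIndep k).1
      (indep_pastNoise hS hG hwIndep k).2 A B K (hθS ((k : ℤ) + 1)) (hθS k) (hνS k) (hθp k)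
      (hp_nonneg i j) (hνh i) (fun b E hE => hMarkov k i j b E hE) (hx k) (hx2 k) (hwG k)
      (hw2 k) (hwMean k)
  -- The moments at time `k + 1` are indexed by `((k + 1 : ℕ) : ℤ) - 1` rather than by `(k : ℤ)`.
  have hset : ∀ (k : ℕ) (i j : Fin N),
      {ω | θ ((k + 1 : ℕ) : ℤ) ω = j ∧ θ (((k + 1 : ℕ) : ℤ) - 1) ω = i}
        = {ω | θ ((k : ℤ) + 1) ω = j ∧ θ (k : ℤ) ω = i} := by
    intro k i j
    push_cast
    rw [add_sub_cancel_right]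
  refine ⟨fun k i j => ?_, fun k i j => ?_⟩
  · unfold mMom
    rw [hset]
    simp only [hrec]
    exact (step k i j).1
  · have hMsum := sum_closedLoop_outer A B K (fun ℓ => MMom μ θ x k ℓ i) ((νh i : ℝ) : 𝕜)
    rw [← hMsum]
    ext r c
    rw [Matrix.add_apply, ← hwCov k, Matrix.smul_apply _ (Matrix.of _), Matrix.of_apply,
      smul_eq_mul]
    unfold MMom piP
    rw [Matrix.of_apply, hset]
    simp only [hrec]
    exact (step k i j).2 r c
end
end
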